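/- arXiv:2312.05240 — 3 statements merged into one kernel-verified Lean document; each statement's English description precedes it below -/
import Mathlib

section
/- In the group ring R[P], the product β·α equals 1; consequently α is a unit of R[P] with inverse β. -/
open MvPolynomial

noncomputable section

/-- The two relators of the Promislow group `P = ⟨a, b | b⁻¹a²b = a⁻², a⁻¹b²a = b⁻²⟩`,
written as words that equal the identity: `b⁻¹a²ba²` and `a⁻¹b²ab²`. -/
def Prels : Set (FreeGroup (Fin 2)) :=
  {(FreeGroup.of 1)⁻¹ * (FreeGroup.of 0) ^ 2 * (FreeGroup.of 1) * (FreeGroup.of 0) ^ 2,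
   (FreeGroup.of 0)⁻¹ * (FreeGroup.of 1) ^ 2 * (FreeGroup.of 0) * (FreeGroup.of 1) ^ 2}

/-- The Promislow group. -/
abbrev P : Type := PresentedGroup Prels

def pa : P := PresentedGroup.of 0
def pb : P := PresentedGroup.of 1
def px : P := pa ^ 2
def py : P := pb ^ 2
def pz : P := (pa * pb) ^ 2

/-- The ring `R = ℤ[s,t]/⟨s⁴+1, t⁴+1⟩`. -/
abbrev Rr : Type :=
  MvPolynomial (Fin 2) ℤ ⧸
    Ideal.span {(X 0 : MvPolynomial (Fin 2) ℤ) ^ 4 + 1, (X 1 : MvPolynomial (Fin 2) ℤ) ^ 4 + 1}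

def s : Rr := Ideal.Quotient.mk _ (X 0)
def t : Rr := Ideal.Quotient.mk _ (X 1)

/-- The image of a group element in the group ring `R[P]`. -/
def G (g : P) : MonoidAlgebra Rr P := MonoidAlgebra.of Rr P g

def α1 : MonoidAlgebra Rr P :=
  1 + t ^ 2 • G (px * pz⁻¹) - t ^ 2 • G (px⁻¹ * pz⁻¹) - s ^ 2 • G (py * pz⁻¹)
    + s ^ 2 • G (py⁻¹ * pz⁻¹)

def αa : MonoidAlgebra Rr P :=
  -(s ^ 2 • G px⁻¹) + 1 - G (px⁻¹ * py⁻¹ * pz) + s ^ 2 • G (py * pz)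

def αb : MonoidAlgebra Rr P :=
  G (px⁻¹ * py⁻¹ * pz) - t ^ 2 • G (px * pz) + t ^ 2 • G (py⁻¹ * pz ^ 2) - G (pz ^ 2)

def αab : MonoidAlgebra Rr P :=
  -(t ^ 2 • G (px⁻¹ * pz⁻¹)) - s ^ 2 • G (py * pz⁻¹) + (s ^ 2 * t ^ 2) • G pz⁻¹
    + G (px⁻¹ * py * pz⁻¹) + s ^ 2 • G (px⁻¹ * pz⁻¹ ^ 2) + t ^ 2 • G (py * pz⁻¹ ^ 2)
    - G (pz⁻¹ ^ 2) - (s ^ 2 * t ^ 2) • G (px⁻¹ * py * pz⁻¹ ^ 2)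

/-- The unit `α ∈ R[P]`. -/
def αU : MonoidAlgebra Rr P :=
  α1 + s • (αa * G pa) + t • (αb * G pb) + (s * t) • (αab * G (pa * pb))

def β1 : MonoidAlgebra Rr P :=
  1 + t ^ 2 • G (px⁻¹ * pz) - t ^ 2 • G (px * pz) + s ^ 2 • G (py * pz) - s ^ 2 • G (py⁻¹ * pz)

def βa : MonoidAlgebra Rr P :=
  -1 + s ^ 2 • G px⁻¹ - s ^ 2 • G (py * pz) + G (px⁻¹ * py⁻¹ * pz)

def βb : MonoidAlgebra Rr P :=
  -G (px⁻¹ * py⁻¹ * pz) + t ^ 2 • G (px * pz) - t ^ 2 • G (py⁻¹ * pz ^ 2) + G (pz ^ 2)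

def βab : MonoidAlgebra Rr P :=
  (s ^ 2 * t ^ 2) • G (px⁻¹ * py) + 1 - t ^ 2 • G py - s ^ 2 • G px⁻¹
    - G (px⁻¹ * py * pz) - (s ^ 2 * t ^ 2) • G pz + s ^ 2 • G (py * pz) + t ^ 2 • G (px⁻¹ * pz)

/-- The inverse unit `β ∈ R[P]`. -/
def βU : MonoidAlgebra Rr P :=
  β1 + s • (βa * G pa) + t • (βb * G pb) + (s * t) • (βab * G (pa * pb))

namespace Promislow

set_option linter.unusedSectionVars false
set_option linter.unusedVariables false

section generic
variable {S : Type*} [CommRing S]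

def A1 (s t x x' y y' z z' : S) : S := 1 + t ^ 2 * (x * z') - t ^ 2 * (x' * z') - s ^ 2 * (y * z')
    + s ^ 2 * (y' * z')
def Aa (s _t _x x' y y' z _z' : S) : S :=
  -(s ^ 2 * x') + 1 - (x' * y' * z) + s ^ 2 * (y * z)
def Ab (_s t x x' _y y' z _z' : S) : S :=
  (x' * y' * z) - t ^ 2 * (x * z) + t ^ 2 * (y' * z ^ 2) - z ^ 2
def Aab (s t _x x' y _y' _z z' : S) : S :=
  -(t ^ 2 * (x' * z')) - s ^ 2 * (y * z') + (s ^ 2 * t ^ 2) * z'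
    + (x' * y * z') + s ^ 2 * (x' * z' ^ 2) + t ^ 2 * (y * z' ^ 2)
    - (z' ^ 2) - (s ^ 2 * t ^ 2) * (x' * y * z' ^ 2)
def B1 (s t x x' y y' z _z' : S) : S :=
  1 + t ^ 2 * (x' * z) - t ^ 2 * (x * z) + s ^ 2 * (y * z) - s ^ 2 * (y' * z)
def Ba (s _t _x x' y y' z _z' : S) : S :=
  -1 + s ^ 2 * x' - s ^ 2 * (y * z) + (x' * y' * z)
def Bb (_s t x x' _y y' z _z' : S) : S :=
  -(x' * y' * z) + t ^ 2 * (x * z) - t ^ 2 * (y' * z ^ 2) + (z ^ 2)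
def Bab (s t _x x' y _y' z _z' : S) : S :=
  (s ^ 2 * t ^ 2) * (x' * y) + 1 - t ^ 2 * y - s ^ 2 * x'
    - (x' * y * z) - (s ^ 2 * t ^ 2) * z + s ^ 2 * (y * z) + t ^ 2 * (x' * z)

variable (s t x x' y y' z z' : S) (hs : s ^ 4 = -1) (ht : t ^ 4 = -1)
  (hx : x * x' = 1) (hy : y * y' = 1) (hz : z * z' = 1)
include hs ht hx hy hz

theorem ba_1 : B1 s t x x' y y' z z' * A1 s t x x' y y' z z'
   + s ^ 2 * (Ba s t x x' y y' z z' * Aa s t x x' y' y z' z * x)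
   + t ^ 2 * (Bb s t x x' y y' z z' * Ab s t x' x y y' z' z * y)
   + s ^ 2 * t ^ 2 * (Bab s t x x' y y' z z' * Aab s t x' x y' y z z' * z) = 1 := by
  unfold A1 Aa Ab Aab B1 Ba Bb Bab
  grind
theorem ba_a : B1 s t x x' y y' z z' * Aa s t x x' y y' z z'
   + (Ba s t x x' y y' z z' * A1 s t x x' y' y z' z)
   + t ^ 2 * (Bb s t x x' y y' z z' * Aab s t x' x y y' z' z * (x' * z'))
   + t ^ 2 * (Bab s t x x' y y' z z' * Ab s t x' x y' y z z' * y') = 0 := by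
  unfold A1 Aa Ab Aab B1 Ba Bb Bab
  grind
theorem ba_b : B1 s t x x' y y' z z' * Ab s t x x' y y' z z'
   + (Bb s t x x' y y' z z' * A1 s t x' x y y' z' z)
   + s ^ 2 * (Ba s t x x' y y' z z' * Aab s t x x' y' y z' z * x)
   + s ^ 2 * (Bab s t x x' y y' z z' * Aa s t x' x y' y z z' * (y' * z)) = 0 := by
  unfold A1 Aa Ab Aab B1 Ba Bb Bab
  grind
theorem ba_ab : B1 s t x x' y y' z z' * Aab s t x x' y y' z z'
   + (Bab s t x x' y y' z z' * A1 s t x' x y' y z z')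
   + (Ba s t x x' y y' z z' * Ab s t x x' y' y z' z)
   + (Bb s t x x' y y' z z' * Aa s t x' x y y' z' z * (x' * y * z')) = 0 := by
  unfold A1 Aa Ab Aab B1 Ba Bb Bab
  grind
theorem ab_1 : A1 s t x x' y y' z z' * B1 s t x x' y y' z z'
   + s ^ 2 * (Aa s t x x' y y' z z' * Ba s t x x' y' y z' z * x)
   + t ^ 2 * (Ab s t x x' y y' z z' * Bb s t x' x y y' z' z * y)
   + s ^ 2 * t ^ 2 * (Aab s t x x' y y' z z' * Bab s t x' x y' y z z' * z) = 1 := by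
  unfold A1 Aa Ab Aab B1 Ba Bb Bab
  grind
theorem ab_a : A1 s t x x' y y' z z' * Ba s t x x' y y' z z'
   + (Aa s t x x' y y' z z' * B1 s t x x' y' y z' z)
   + t ^ 2 * (Ab s t x x' y y' z z' * Bab s t x' x y y' z' z * (x' * z'))
   + t ^ 2 * (Aab s t x x' y y' z z' * Bb s t x' x y' y z z' * y') = 0 := by
  unfold A1 Aa Ab Aab B1 Ba Bb Bab
  grind
theorem ab_b : A1 s t x x' y y' z z' * Bb s t x x' y y' z z'
   + (Ab s t x x' y y' z z' * B1 s t x' x y y' z' z)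
   + s ^ 2 * (Aa s t x x' y y' z z' * Bab s t x x' y' y z' z * x)
   + s ^ 2 * (Aab s t x x' y y' z z' * Ba s t x' x y' y z z' * (y' * z)) = 0 := by
  unfold A1 Aa Ab Aab B1 Ba Bb Bab
  grind
theorem ab_ab : A1 s t x x' y y' z z' * Bab s t x x' y y' z z'
   + (Aab s t x x' y y' z z' * B1 s t x' x y' y z z')
   + (Aa s t x x' y y' z z' * Bb s t x x' y' y z' z)
   + (Ab s t x x' y y' z z' * Ba s t x' x y y' z' z * (x' * y * z')) = 0 := by
  unfold A1 Aa Ab Aab B1 Ba Bb Bab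
  grind
end generic

section assemble
variable {S : Type*} [CommRing S] {A : Type*} [Ring A] (i : S →+* A)

theorem term (g h k : A) (p q q' w : S) (hg : SemiconjBy g (i q) (i q'))
    (hw : g * h = i w * k) : (i p * g) * (i q * h) = i (p * q' * w) * k := by
  have := hg.eq
  calc (i p * g) * (i q * h) = i p * (g * i q) * h := by noncomm_ring
    _ = i p * i q' * (g * h) := by rw [this]; noncomm_ring
    _ = _ := by rw [hw]; simp only [map_mul]; noncomm_ring

theorem mul_sc {g : A} {p p' q q' : S} (h : SemiconjBy g (i p) (i p'))
    (h' : SemiconjBy g (i q) (i q')) : SemiconjBy g (i (p * q)) (i (p' * q')) := by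
  simpa only [map_mul] using h.mul_right h'

section conj
variable (g : A) (s t x x' y y' z z' X X' Y Y' Z Z' : S)
  (hs : SemiconjBy g (i s) (i s)) (ht : SemiconjBy g (i t) (i t))
  (hx : SemiconjBy g (i x) (i X)) (hx' : SemiconjBy g (i x') (i X'))
  (hy : SemiconjBy g (i y) (i Y)) (hy' : SemiconjBy g (i y') (i Y'))
  (hz : SemiconjBy g (i z) (i Z)) (hz' : SemiconjBy g (i z') (i Z'))
include hs ht hx hx' hy hy' hz hz'

theorem sc_A : SemiconjBy g (i (A1 s t x x' y y' z z')) (i (A1 s t X X' Y Y' Z Z')) ∧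
    SemiconjBy g (i (s * Aa s t x x' y y' z z')) (i (s * Aa s t X X' Y Y' Z Z')) ∧
    SemiconjBy g (i (t * Ab s t x x' y y' z z')) (i (t * Ab s t X X' Y Y' Z Z')) ∧
    SemiconjBy g (i (s * t * Aab s t x x' y y' z z')) (i (s * t * Aab s t X X' Y Y' Z Z')) := by
  unfold A1 Aa Ab Aab
  simp only [map_add, map_sub, map_mul, map_neg, map_pow, map_one]
  refine ⟨?_, ?_, ?_, ?_⟩
  all_goals repeat' first
    | assumption
    | exact SemiconjBy.one_right g
    | apply SemiconjBy.add_right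
    | apply SemiconjBy.sub_right
    | apply SemiconjBy.neg_right
    | apply SemiconjBy.mul_right
    | apply SemiconjBy.pow_right

theorem sc_B : SemiconjBy g (i (B1 s t x x' y y' z z')) (i (B1 s t X X' Y Y' Z Z')) ∧
    SemiconjBy g (i (s * Ba s t x x' y y' z z')) (i (s * Ba s t X X' Y Y' Z Z')) ∧
    SemiconjBy g (i (t * Bb s t x x' y y' z z')) (i (t * Bb s t X X' Y Y' Z Z')) ∧
    SemiconjBy g (i (s * t * Bab s t x x' y y' z z')) (i (s * t * Bab s t X X' Y Y' Z Z')) := by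
  unfold B1 Ba Bb Bab
  simp only [map_add, map_sub, map_mul, map_neg, map_pow, map_one]
  refine ⟨?_, ?_, ?_, ?_⟩
  all_goals repeat' first
    | assumption
    | exact SemiconjBy.one_right g
    | apply SemiconjBy.add_right
    | apply SemiconjBy.sub_right
    | apply SemiconjBy.neg_right
    | apply SemiconjBy.mul_right
    | apply SemiconjBy.pow_right

end conj

theorem expand (a b : A) (x x' y y' z z' p1 pa pb pc q1 qa qb qc a1 aa ab ac b1 ba bb bc c1 ca cb cc : S)
  (waa : a * a = i x) (wac : a * (a * b) = i x * b)
  (wba : b * a = i x' * i y * i z' * (a * b)) (wbb : b * b = i y)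
  (wbc : b * (a * b) = i x' * i z' * a) (wca : a * b * a = i y' * i z * b)
  (wcb : a * b * b = i y' * a) (wcc : a * b * (a * b) = i z)
  (ha : SemiconjBy a (i q1) (i a1) ∧ SemiconjBy a (i qa) (i aa) ∧ SemiconjBy a (i qb) (i ab) ∧ SemiconjBy a (i qc) (i ac))
  (hb : SemiconjBy b (i q1) (i b1) ∧ SemiconjBy b (i qa) (i ba) ∧ SemiconjBy b (i qb) (i bb) ∧ SemiconjBy b (i qc) (i bc))
  (hc : SemiconjBy (a * b) (i q1) (i c1) ∧ SemiconjBy (a * b) (i qa) (i ca) ∧ SemiconjBy (a * b) (i qb) (i cb) ∧ SemiconjBy (a * b) (i qc) (i cc))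
  : (i p1 + i pa * a + i pb * b + i pc * (a * b)) * (i q1 + i qa * a + i qb * b + i qc * (a * b)) =
    i (p1 * q1 + pa * aa * x + pb * bb * y + pc * cc * z) +
    i (p1 * qa + pa * a1 + pb * bc * (x' * z') + pc * cb * y') * a +
    i (p1 * qb + pa * ac * x + pb * b1 + pc * ca * (y' * z)) * b +
    i (p1 * qc + pa * ab + pb * ba * (x' * y * z') + pc * c1) * (a * b) := by
  obtain ⟨ha1, haa, hab, hac⟩ := ha
  obtain ⟨hb1, hba, hbb, hbc⟩ := hb
  obtain ⟨hc1, hca, hcb, hcc⟩ := hc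
  have ea1 := term i a 1 a pa _ _ 1 ha1 (by simp)
  have eaa := term i a a 1 pa _ _ x haa (by simpa using waa)
  have eab := term i a b (a * b) pa _ _ 1 hab (by simp)
  have eac := term i a (a * b) b pa _ _ x hac (by simpa using wac)
  have eb1 := term i b 1 b pb _ _ 1 hb1 (by simp)
  have eba := term i b a (a * b) pb _ _ (x' * y * z') hba (by simpa using wba)
  have ebb := term i b b 1 pb _ _ y hbb (by simpa using wbb)
  have ebc := term i b (a * b) a pb _ _ (x' * z') hbc (by simpa using wbc)
  have ec1 := term i (a * b) 1 (a * b) pc _ _ 1 hc1 (by simp)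
  have eca := term i (a * b) a b pc _ _ (y' * z) hca (by simpa using wca)
  have ecb := term i (a * b) b a pc _ _ y' hcb (by simpa using wcb)
  have ecc := term i (a * b) (a * b) 1 pc _ _ z hcc (by simpa using wcc)
  simp only [mul_one] at ea1 eaa eab eac eb1 eba ebb ebc ec1 eca ecb ecc
  simp only [add_mul, mul_add, ea1, eaa, eab, eac, eb1, eba, ebb, ebc, ec1, eca, ecb, ecc]
  simp only [map_add, map_mul, add_mul, ← mul_assoc]
  abel

variable (a b : A) (s t x x' y y' z z' : S) (hs : s ^ 4 = -1) (ht : t ^ 4 = -1)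
  (hx : x * x' = 1) (hy : y * y' = 1) (hz : z * z' = 1)
  (sa : SemiconjBy a (i s) (i s)) (ta : SemiconjBy a (i t) (i t))
  (xa : SemiconjBy a (i x) (i x))
  (xa' : SemiconjBy a (i x') (i x'))
  (ya : SemiconjBy a (i y) (i y'))
  (ya' : SemiconjBy a (i y') (i y))
  (za : SemiconjBy a (i z) (i z'))
  (za' : SemiconjBy a (i z') (i z))
  (sb : SemiconjBy b (i s) (i s)) (tb : SemiconjBy b (i t) (i t))
  (xb : SemiconjBy b (i x) (i x'))
  (xb' : SemiconjBy b (i x') (i x))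
  (yb : SemiconjBy b (i y) (i y))
  (yb' : SemiconjBy b (i y') (i y'))
  (zb : SemiconjBy b (i z) (i z'))
  (zb' : SemiconjBy b (i z') (i z))
  (sc : SemiconjBy (a * b) (i s) (i s)) (tc : SemiconjBy (a * b) (i t) (i t))
  (xc : SemiconjBy (a * b) (i x) (i x'))
  (xc' : SemiconjBy (a * b) (i x') (i x))
  (yc : SemiconjBy (a * b) (i y) (i y'))
  (yc' : SemiconjBy (a * b) (i y') (i y))
  (zc : SemiconjBy (a * b) (i z) (i z))
  (zc' : SemiconjBy (a * b) (i z') (i z'))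
  (waa : a * a = i x) (wac : a * (a * b) = i x * b)
  (wba : b * a = i x' * i y * i z' * (a * b)) (wbb : b * b = i y)
  (wbc : b * (a * b) = i x' * i z' * a) (wca : a * b * a = i y' * i z * b)
  (wcb : a * b * b = i y' * a) (wcc : a * b * (a * b) = i z)
include hs ht hx hy hz sa ta xa xa' ya ya' za za' sb tb xb xb' yb yb' zb zb'
  sc tc xc xc' yc yc' zc zc' waa wac wba wbb wbc wca wcb wcc

theorem ba_prod : (i (B1 s t x x' y y' z z') + i (s * Ba s t x x' y y' z z') * a + i (t * Bb s t x x' y y' z z') * b + i (s * t * Bab s t x x' y y' z z') * (a * b)) *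
    (i (A1 s t x x' y y' z z') + i (s * Aa s t x x' y y' z z') * a + i (t * Ab s t x x' y y' z z') * b + i (s * t * Aab s t x x' y y' z z') * (a * b)) = 1 := by
  rw [expand i a b x x' y y' z z' _ _ _ _ _ _ _ _ _ _ _ _ _ _ _ _ _ _ _ _ waa wac wba wbb wbc wca wcb wcc
    (sc_A i _ s t x x' y y' z z' _ _ _ _ _ _ sa ta xa xa' ya ya' za za')
    (sc_A i _ s t x x' y y' z z' _ _ _ _ _ _ sb tb xb xb' yb yb' zb zb')
    (sc_A i _ s t x x' y y' z z' _ _ _ _ _ _ sc tc xc xc' yc yc' zc zc')]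
  have h1 := ba_1 s t x x' y y' z z' hs ht hx hy hz
  have ha := ba_a s t x x' y y' z z' hs ht hx hy hz
  have hb := ba_b s t x x' y y' z z' hs ht hx hy hz
  have hc := ba_ab s t x x' y y' z z' hs ht hx hy hz
  convert_to i 1 + i 0 * a + i 0 * b + i 0 * (a * b) = 1
  · congr 1
    · congr 1
      · congr 1
        · congr 1
          linear_combination h1
        · congr 2
          linear_combination s * ha
      · congr 2
        linear_combination t * hb
    · congr 2
      linear_combination s * t * hc
  · simp

theorem ab_prod : (i (A1 s t x x' y y' z z') + i (s * Aa s t x x' y y' z z') * a + i (t * Ab s t x x' y y' z z') * b + i (s * t * Aab s t x x' y y' z z') * (a * b)) *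
    (i (B1 s t x x' y y' z z') + i (s * Ba s t x x' y y' z z') * a + i (t * Bb s t x x' y y' z z') * b + i (s * t * Bab s t x x' y y' z z') * (a * b)) = 1 := by
  rw [expand i a b x x' y y' z z' _ _ _ _ _ _ _ _ _ _ _ _ _ _ _ _ _ _ _ _ waa wac wba wbb wbc wca wcb wcc
    (sc_B i _ s t x x' y y' z z' _ _ _ _ _ _ sa ta xa xa' ya ya' za za')
    (sc_B i _ s t x x' y y' z z' _ _ _ _ _ _ sb tb xb xb' yb yb' zb zb')
    (sc_B i _ s t x x' y y' z z' _ _ _ _ _ _ sc tc xc xc' yc yc' zc zc')]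
  have h1 := ab_1 s t x x' y y' z z' hs ht hx hy hz
  have ha := ab_a s t x x' y y' z z' hs ht hx hy hz
  have hb := ab_b s t x x' y y' z z' hs ht hx hy hz
  have hc := ab_ab s t x x' y y' z z' hs ht hx hy hz
  convert_to i 1 + i 0 * a + i 0 * b + i 0 * (a * b) = 1
  · congr 1
    · congr 1
      · congr 1
        · congr 1
          linear_combination h1
        · congr 2
          linear_combination s * ha
      · congr 2
        linear_combination t * hb
    · congr 2
      linear_combination s * t * hc
  · simp

end assemble

section group

theorem rel_b : pb * px = px⁻¹ * pb := by
  have h : pb⁻¹ * pa ^ 2 * pb * pa ^ 2 = 1 :=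
    PresentedGroup.one_of_mem (rels := Prels) (Or.inl rfl)
  have h2 : pa ^ 2 * (pb * pa ^ 2) = pb := by
    have := congrArg (pb * ·) h
    simpa [mul_assoc] using this
  rw [eq_inv_mul_iff_mul_eq]; exact h2

theorem rel_a : pa * py = py⁻¹ * pa := by
  have h : pa⁻¹ * pb ^ 2 * pa * pb ^ 2 = 1 :=
    PresentedGroup.one_of_mem (rels := Prels) (Or.inr rfl)
  have h2 : pb ^ 2 * (pa * pb ^ 2) = pa := by
    have := congrArg (pa * ·) h
    simpa [mul_assoc] using this
  rw [eq_inv_mul_iff_mul_eq]; exact h2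

theorem s_bx : SemiconjBy pb px px⁻¹ := rel_b
theorem s_ay : SemiconjBy pa py py⁻¹ := rel_a
theorem s_ax : SemiconjBy pa px px := (Commute.refl pa).pow_right 2
theorem s_by : SemiconjBy pb py py := (Commute.refl pb).pow_right 2

/-- Inverting a semiconjugation `g u = u⁻¹ g`. -/
theorem s_inv {g u : P} (h : SemiconjBy g u u⁻¹) : SemiconjBy g u⁻¹ u := by
  simpa using h.inv_right

theorem s_az : SemiconjBy pa pz pz⁻¹ := by
  have h1 : pb * px * pb = px⁻¹ * py := by rw [rel_b, py, pow_two, mul_assoc]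
  have h2 : pz * pa * pz = pa := by
    calc pz * pa * pz = pa * pb * pa * (pb * px * pb) * pa * pb := by
          simp only [pz, px, pow_two, mul_assoc]
      _ = pa * pb * pa⁻¹ * (py * pa) * pb := by
          rw [h1]; simp only [px, pow_two, mul_assoc, mul_inv_rev, mul_inv_cancel_left]
      _ = pa * pb * pa⁻¹ * (pa * py⁻¹) * pb := by rw [(s_inv s_ay).eq]
      _ = pa := by simp [py, pow_two, mul_assoc]
  show pa * pz = pz⁻¹ * pa
  rw [eq_inv_mul_iff_mul_eq, ← mul_assoc]; exact h2

theorem s_bz : SemiconjBy pb pz pz⁻¹ := by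
  have h1 : pa * py * pa = py⁻¹ * px := by rw [rel_a, px, pow_two, mul_assoc]
  have h2 : pz * pb * pz = pb := by
    calc pz * pb * pz = pa * pb * (pa * py * pa) * (pb * pa * pb) := by
          simp only [pz, py, pow_two, mul_assoc]
      _ = pa * pb⁻¹ * (px * pb) * pa * pb := by
          rw [h1]; simp only [py, pow_two, mul_assoc, mul_inv_rev, mul_inv_cancel_left]
      _ = pa * pb⁻¹ * (pb * px⁻¹) * pa * pb := by rw [(s_inv s_bx).eq]
      _ = pb := by simp [px, pow_two, mul_assoc]
  show pb * pz = pz⁻¹ * pb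
  rw [eq_inv_mul_iff_mul_eq, ← mul_assoc]; exact h2

theorem c_xy : Commute px py := by
  have := (s_inv s_ay).mul_left s_ay
  rwa [← pow_two] at this
theorem c_xz : Commute px pz := by
  have := (s_inv s_az).mul_left s_az
  rwa [← pow_two] at this
theorem c_yz : Commute py pz := by
  have := (s_inv s_bz).mul_left s_bz
  rwa [← pow_two] at this

theorem g_bc : pb * (pa * pb) = px⁻¹ * pz⁻¹ * pa := by
  have : pz * px * (pb * (pa * pb)) = pa := by
    rw [← c_xz.eq]
    have h := s_az.eq
    calc px * pz * (pb * (pa * pb)) = pa * (pa * pz) * (pb * (pa * pb)) := by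
          simp only [px, pow_two, mul_assoc]
      _ = pa * pz⁻¹ * (pa * pb) ^ 2 := by rw [h]; simp only [pow_two, mul_assoc]
      _ = pa := by rw [← pz]; simp
  rw [← mul_inv_rev, eq_inv_mul_iff_mul_eq]; exact this

theorem g_cb : pa * pb * pb = py⁻¹ * pa := by
  rw [← rel_a, py, pow_two, mul_assoc]

theorem g_ca : pa * pb * pa = py⁻¹ * pz * pb := by
  have : pa * pb * pa = pz * pb⁻¹ := by simp [pz, pow_two, mul_assoc]
  rw [this, c_yz.inv_left.eq, mul_assoc]; simp [py, pow_two]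

theorem g_ba : pb * pa = px⁻¹ * py * pz⁻¹ * (pa * pb) := by
  have h : pb * pa = px⁻¹ * pz⁻¹ * pa * pb⁻¹ := by rw [← g_bc]; simp [mul_assoc]
  have h2 : pa * pb⁻¹ = py * (pa * pb) := by
    rw [← mul_assoc, ← (s_inv s_ay).eq]; simp [py, pow_two, mul_assoc]
  rw [h, mul_assoc _ pa, h2, mul_assoc px⁻¹ py, c_yz.inv_right.eq]; simp only [mul_assoc]

end group

section final

theorem G_mul (g h : P) : G (g * h) = G g * G h := map_mul (MonoidAlgebra.of Rr P) g h
theorem G_one : G 1 = 1 := map_one (MonoidAlgebra.of Rr P)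
theorem G_pow (g : P) (n : ℕ) : G (g ^ n) = G g ^ n := map_pow (MonoidAlgebra.of Rr P) g n
theorem G_sc {g u v : P} (h : SemiconjBy g u v) : SemiconjBy (G g) (G u) (G v) := by
  show _ * _ = _ * _
  rw [← G_mul, ← G_mul, h.eq]

theorem s4 : s ^ 4 = -1 := by
  rw [← sub_eq_zero, sub_neg_eq_add]
  exact Ideal.Quotient.eq_zero_iff_mem.mpr (Ideal.subset_span (Or.inl rfl))
theorem t4 : t ^ 4 = -1 := by
  rw [← sub_eq_zero, sub_neg_eq_add]
  exact Ideal.Quotient.eq_zero_iff_mem.mpr (Ideal.subset_span (Or.inr rfl))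

def gens : Set (MonoidAlgebra Rr P) :=
  G '' {px, px⁻¹, py, py⁻¹, pz, pz⁻¹}

theorem gens_comm : ∀ u ∈ gens, ∀ v ∈ gens, u * v = v * u := by
  rintro _ ⟨g, hg, rfl⟩ _ ⟨h, hh, rfl⟩
  rw [← G_mul, ← G_mul]
  congr 1
  change Commute g h
  have := c_xy
  have := c_xz
  have := c_yz
  have := c_xy.symm
  have := c_xz.symm
  have := c_yz.symm
  simp only [Set.mem_insert_iff, Set.mem_singleton_iff] at hg hh
  rcases hg with rfl | rfl | rfl | rfl | rfl | rfl <;>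
    rcases hh with rfl | rfl | rfl | rfl | rfl | rfl <;>
    (try simp only [Commute.inv_left_iff, Commute.inv_right_iff, Commute.refl]) <;> assumption

abbrev SS : Type := Algebra.adjoin Rr gens

instance instSS : CommRing SS := Algebra.adjoinCommRingOfComm Rr gens_comm

def ii : SS →+* MonoidAlgebra Rr P := (Algebra.adjoin Rr gens).val.toRingHom

def el (g : P) (h : g ∈ ({px, px⁻¹, py, py⁻¹, pz, pz⁻¹} : Set P)) : SS :=
  ⟨G g, Algebra.subset_adjoin ⟨g, h, rfl⟩⟩
theorem ii_el (g : P) (h) : ii (el g h) = G g := rfl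

def sc (r : Rr) : SS := algebraMap Rr (Algebra.adjoin Rr gens) r
theorem ii_sc (r : Rr) : ii (sc r) = algebraMap Rr _ r := rfl
theorem sc_sc (g : MonoidAlgebra Rr P) (r : Rr) : SemiconjBy g (ii (sc r)) (ii (sc r)) :=
  (Algebra.commutes r g).symm
theorem sc_4 (r : Rr) (h : r ^ 4 = -1) : sc r ^ 4 = -1 := by
  apply Subtype.val_injective
  change (algebraMap Rr (MonoidAlgebra Rr P) r) ^ 4 = -1
  rw [← map_pow, h, map_neg, map_one]
theorem el_mul (g : P) (h) (h') : el g h * el g⁻¹ h' = 1 := by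
  apply Subtype.val_injective
  change G g * G g⁻¹ = 1
  rw [← G_mul, mul_inv_cancel, G_one]

def ex := el px (by simp)
def ex' := el px⁻¹ (by simp)
def ey := el py (by simp)
def ey' := el py⁻¹ (by simp)
def ez := el pz (by simp)
def ez' := el pz⁻¹ (by simp)

theorem exx : ex * ex' = 1 := el_mul _ _ _
theorem eyy : ey * ey' = 1 := el_mul _ _ _
theorem ezz : ez * ez' = 1 := el_mul _ _ _

theorem i_x : ii ex = G px := rfl
theorem i_x' : ii ex' = G px⁻¹ := rfl
theorem i_y : ii ey = G py := rfl
theorem i_y' : ii ey' = G py⁻¹ := rfl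
theorem i_z : ii ez = G pz := rfl
theorem i_z' : ii ez' = G pz⁻¹ := rfl

theorem alpha_eq : αU = ii (A1 (sc s) (sc t) ex ex' ey ey' ez ez')
    + ii (sc s * Aa (sc s) (sc t) ex ex' ey ey' ez ez') * G pa
    + ii (sc t * Ab (sc s) (sc t) ex ex' ey ey' ez ez') * G pb
    + ii (sc s * sc t * Aab (sc s) (sc t) ex ex' ey ey' ez ez') * (G pa * G pb) := by
  unfold αU α1 αa αb αab A1 Aa Ab Aab
  simp only [map_add, map_sub, map_mul, map_neg, map_pow, map_one, i_x, i_x', i_y, i_y', i_z,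
    i_z', ii_sc, G_mul, G_pow, Algebra.smul_def, mul_assoc]

theorem beta_eq : βU = ii (B1 (sc s) (sc t) ex ex' ey ey' ez ez')
    + ii (sc s * Ba (sc s) (sc t) ex ex' ey ey' ez ez') * G pa
    + ii (sc t * Bb (sc s) (sc t) ex ex' ey ey' ez ez') * G pb
    + ii (sc s * sc t * Bab (sc s) (sc t) ex ex' ey ey' ez ez') * (G pa * G pb) := by
  unfold βU β1 βa βb βab B1 Ba Bb Bab
  simp only [map_add, map_sub, map_mul, map_neg, map_pow, map_one, i_x, i_x', i_y, i_y', i_z,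
    i_z', ii_sc, G_mul, G_pow, Algebra.smul_def, mul_assoc]

theorem G_aa : G pa * G pa = ii ex := by rw [i_x, ← G_mul, px, pow_two]
theorem G_ac : G pa * (G pa * G pb) = ii ex * G pb := by rw [← mul_assoc, G_aa]
theorem G_ba : G pb * G pa = ii ex' * ii ey * ii ez' * (G pa * G pb) := by
  simp only [i_x', i_y, i_z', ← G_mul, g_ba]
theorem G_bb : G pb * G pb = ii ey := by rw [i_y, ← G_mul, py, pow_two]
theorem G_bc : G pb * (G pa * G pb) = ii ex' * ii ez' * G pa := by
  simp only [i_x', i_z', ← G_mul, g_bc]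
theorem G_ca : G pa * G pb * G pa = ii ey' * ii ez * G pb := by
  simp only [i_y', i_z, ← G_mul, g_ca]
theorem G_cb : G pa * G pb * G pb = ii ey' * G pa := by
  simp only [i_y', ← G_mul, g_cb]
theorem G_cc : G pa * G pb * (G pa * G pb) = ii ez := by
  simp only [i_z, ← G_mul, pz, pow_two]

theorem beta_alpha : βU * αU = 1 := by
  rw [alpha_eq, beta_eq]
  exact ba_prod ii (G pa) (G pb) (sc s) (sc t) ex ex' ey ey' ez ez' (sc_4 s s4) (sc_4 t t4)
    exx eyy ezz
    (sc_sc _ _) (sc_sc _ _)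
    (G_sc s_ax) (G_sc s_ax.inv_right) (G_sc s_ay) (G_sc (s_inv s_ay)) (G_sc s_az) (G_sc (s_inv s_az))
    (sc_sc _ _) (sc_sc _ _)
    (G_sc s_bx) (G_sc (s_inv s_bx)) (G_sc s_by) (G_sc s_by.inv_right) (G_sc s_bz) (G_sc (s_inv s_bz))
    (sc_sc _ _) (sc_sc _ _)
    ((G_sc s_ax.inv_right).mul_left (G_sc s_bx)) ((G_sc s_ax).mul_left (G_sc (s_inv s_bx))) ((G_sc s_ay).mul_left (G_sc s_by)) ((G_sc (s_inv s_ay)).mul_left (G_sc s_by.inv_right)) ((G_sc (s_inv s_az)).mul_left (G_sc s_bz)) ((G_sc s_az).mul_left (G_sc (s_inv s_bz)))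
    G_aa G_ac G_ba G_bb G_bc G_ca G_cb G_cc

theorem alpha_beta : αU * βU = 1 := by
  rw [alpha_eq, beta_eq]
  exact ab_prod ii (G pa) (G pb) (sc s) (sc t) ex ex' ey ey' ez ez' (sc_4 s s4) (sc_4 t t4)
    exx eyy ezz
    (sc_sc _ _) (sc_sc _ _)
    (G_sc s_ax) (G_sc s_ax.inv_right) (G_sc s_ay) (G_sc (s_inv s_ay)) (G_sc s_az) (G_sc (s_inv s_az))
    (sc_sc _ _) (sc_sc _ _)
    (G_sc s_bx) (G_sc (s_inv s_bx)) (G_sc s_by) (G_sc s_by.inv_right) (G_sc s_bz) (G_sc (s_inv s_bz))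
    (sc_sc _ _) (sc_sc _ _)
    ((G_sc s_ax.inv_right).mul_left (G_sc s_bx)) ((G_sc s_ax).mul_left (G_sc (s_inv s_bx))) ((G_sc s_ay).mul_left (G_sc s_by)) ((G_sc (s_inv s_ay)).mul_left (G_sc s_by.inv_right)) ((G_sc (s_inv s_az)).mul_left (G_sc s_bz)) ((G_sc s_az).mul_left (G_sc (s_inv s_bz)))
    G_aa G_ac G_ba G_bb G_bc G_ca G_cb G_cc

end final
end Promislow

/-- In the group ring `R[P]`, the product `β·α` equals `1`; consequently `α` is a unit
of `R[P]` with inverse `β`. -/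
theorem beta_mul_alpha : βU * αU = 1 ∧
    ∃ u : (MonoidAlgebra Rr P)ˣ, (u : MonoidAlgebra Rr P) = αU ∧
      ((u⁻¹ : (MonoidAlgebra Rr P)ˣ) : MonoidAlgebra Rr P) = βU := by 
  exact ⟨Promislow.beta_alpha, ⟨⟨αU, βU, Promislow.alpha_beta, Promislow.beta_alpha⟩, rfl, rfl⟩⟩
end
end

section
/- Let ζ₈ ∈ ℂ be a primitive 8th root of unity and i = ζ₈². Then the element u = 1 + i(x − x⁻¹ − y + y⁻¹)z⁻¹ + ζ₈(−i·x⁻¹ + 1 − x⁻¹y⁻¹z + i·yz)·a + ζ₈(x⁻¹y⁻¹z − i·xz + i·y⁻¹z² − z²)·b + i(−i·x⁻¹ − i·y − 1 + x⁻¹y + i·x⁻¹z⁻¹ + i·yz⁻¹ − z⁻¹ + x⁻¹yz⁻¹)z⁻¹·(ab) is a unit of the group ring ℂ[P], and u is not a trivial unit. -/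
noncomputable section

/-- The image of a group element in the group ring `ℂ[P]`. -/
def Gc (g : P) : MonoidAlgebra ℂ P := MonoidAlgebra.of ℂ P g

/-- The explicit non-trivial unit of `ℂ[P]`, for a primitive 8th root of unity `ζ`
and `i = ζ²`. -/
def uC (ζ : ℂ) : MonoidAlgebra ℂ P :=
  1 + ζ ^ 2 • ((Gc px - Gc px⁻¹ - Gc py + Gc py⁻¹) * Gc pz⁻¹)
    + ζ • ((-(ζ ^ 2 • Gc px⁻¹) + 1 - Gc (px⁻¹ * py⁻¹ * pz) + ζ ^ 2 • Gc (py * pz)) * Gc pa)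
    + ζ • ((Gc (px⁻¹ * py⁻¹ * pz) - ζ ^ 2 • Gc (px * pz) + ζ ^ 2 • Gc (py⁻¹ * pz ^ 2)
        - Gc (pz ^ 2)) * Gc pb)
    + ζ ^ 2 • ((-(ζ ^ 2 • Gc px⁻¹) - ζ ^ 2 • Gc py - 1 + Gc (px⁻¹ * py)
        + ζ ^ 2 • Gc (px⁻¹ * pz⁻¹) + ζ ^ 2 • Gc (py * pz⁻¹) - Gc pz⁻¹
        + Gc (px⁻¹ * py * pz⁻¹)) * Gc pz⁻¹ * Gc (pa * pb))

set_option linter.all false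

section grp
variable {G : Type*} [Group G] {a b : G}

lemma grp_bx (h1 : b⁻¹ * a ^ 2 * b * a ^ 2 = 1) : SemiconjBy b (a ^ 2) (a ^ 2)⁻¹ := by
  have h : a ^ 2 * b = b * (a ^ 2)⁻¹ := by
    rw [eq_mul_inv_iff_mul_eq, ← mul_left_cancel_iff (a := b⁻¹)]
    simpa [mul_assoc] using h1
  have h2 : SemiconjBy b (a ^ 2)⁻¹ (a ^ 2) := h.symm
  simpa using h2.inv_right

lemma grp_az (h1 : b⁻¹ * a ^ 2 * b * a ^ 2 = 1) (h2 : a⁻¹ * b ^ 2 * a * b ^ 2 = 1) :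
    SemiconjBy a ((a * b) ^ 2) ((a * b) ^ 2)⁻¹ := by
  have e1 := (grp_bx h1)
  have e1' := e1.inv_right
  have e2 := (grp_bx h2)
  have e2' := e2.inv_right
  rw [inv_inv] at e1' e2'
  have c1 : a * a = a ^ 2 := (sq a).symm
  have c2 : b * b = b ^ 2 := (sq b).symm
  have c3 : Commute a (a ^ 2) := (Commute.refl a).pow_right 2
  have c4 : Commute b (b ^ 2) := (Commute.refl b).pow_right 2
  have c5 : Commute (b ^ 2) (a ^ 2) := by
    rw [sq b]; exact e1'.mul_left e1
  unfold SemiconjBy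
  rw [← mul_right_inj ((a * b) ^ 2), mul_inv_cancel_left]
  simp only [SemiconjBy] at e1 e1' e2 e2'
  generalize hx : a ^ 2 = x at *
  generalize hy : b ^ 2 = y at *
  calc (a * b) ^ 2 * (a * (a * b) ^ 2) = a * b * a * (b * (a * a)) * b * a * b := by
        simp only [sq, mul_assoc]
    _ = a * b * (a * x⁻¹) * y * a * b := by rw [c1, e1]; simp only [← c2, mul_assoc]
    _ = a * (b * x⁻¹) * (a * y) * a * b := by rw [c3.inv_right.eq]; simp only [mul_assoc]
    _ = a * x * (b * y⁻¹) * (a * a) * b := by rw [e1', e2]; simp only [mul_assoc]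
    _ = a * x * y⁻¹ * (b * x) * b := by rw [c4.inv_right.eq, c1]; simp only [mul_assoc]
    _ = a * x * (y⁻¹ * x⁻¹) * y := by rw [e1]; simp only [← c2, mul_assoc]
    _ = a := by rw [c5.inv_inv.eq]; group

lemma grp_bz (h1 : b⁻¹ * a ^ 2 * b * a ^ 2 = 1) (h2 : a⁻¹ * b ^ 2 * a * b ^ 2 = 1) :
    SemiconjBy b ((a * b) ^ 2) ((a * b) ^ 2)⁻¹ := by
  have e1 := (grp_bx h1)
  have e2 := (grp_bx h2)
  simp only [SemiconjBy] at e1 e2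
  unfold SemiconjBy
  rw [← mul_right_inj ((a * b) ^ 2), mul_inv_cancel_left]
  have c4 : Commute b (b ^ 2) := (Commute.refl b).pow_right 2
  calc (a * b) ^ 2 * (b * (a * b) ^ 2) = a * b * (a * b ^ 2) * a * b * a * b := by
        simp only [sq, mul_assoc]
    _ = a * (b * (b ^ 2)⁻¹) * a ^ 2 * b * a * b := by rw [e2]; simp only [sq, mul_assoc]
    _ = a * (b ^ 2)⁻¹ * (b * a ^ 2) * b * a * b := by rw [c4.inv_right.eq]; simp only [mul_assoc]
    _ = a * (b ^ 2)⁻¹ * (a ^ 2)⁻¹ * b ^ 2 * a * b := by rw [e1]; simp only [sq, mul_assoc]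
    _ = a * ((b ^ 2)⁻¹ * ((a ^ 2)⁻¹ * b ^ 2)) * a * b := by simp only [mul_assoc]
    _ = a * (a ^ 2)⁻¹ * a * b := by
        have c5 : Commute (b ^ 2) (a ^ 2) := by
          have e := (grp_bx h1)
          have e' := e.inv_right
          rw [inv_inv] at e'
          rw [sq b]; exact e'.mul_left e
        rw [← c5.inv_right.eq]; simp only [inv_mul_cancel_left, mul_assoc]
    _ = b := by group

end grp

section alg
variable {S : Type*} [CommRing S]
def fp (i x x' y y' z' : S) : S := 1 + i * ((x - x' - y + y') * z')
def fq (i w x' y y' z : S) : S := w * (-(i * x') + 1 - x' * y' * z + i * (y * z))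
def fr (i w x x' y' z : S) : S := w * (x' * y' * z - i * (x * z) + i * (y' * (z * z)) - z * z)
def fs (i x' y z' : S) : S := i * ((-(i * x') - i * y - 1 + x' * y + i * (x' * z') + i * (y * z')
  - z' + x' * y * z') * z')
def gs (i x' y z : S) : S := x' + y + i * 1 - i * (x' * y) - x' * z - y * z + i * z - i * (x' * y * z)

variable {i w x x' y y' z z' : S} 

lemma uv0 (hw : w * w = i) (hi : i * i = -1) (hx : x * x' = 1) (hy : y * y' = 1) (hz : z * z' = 1) :
    fp i x x' y y' z' * fp i x' x y' y z + fq i w x' y y' z * (-fq i w x' y' y z') * x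
      + fr i w x x' y' z * (-fr i w x' x y' z') * y + fs i x' y z' * gs i x y' z * z = 1 := by
  unfold fp fq fr fs gs
  grind

lemma uv1 (hw : w * w = i) (hi : i * i = -1) (hx : x * x' = 1) (hy : y * y' = 1) (hz : z * z' = 1) :
    fp i x x' y y' z' * (-fq i w x' y y' z) + fq i w x' y y' z * fp i x' x y y' z'
      + fr i w x x' y' z * gs i x y z' * (x' * z') + fs i x' y z' * (-fr i w x' x y z) * y' = 0 := by
  unfold fp fq fr fs gs
  grind

lemma uv2 (hw : w * w = i) (hi : i * i = -1) (hx : x * x' = 1) (hy : y * y' = 1) (hz : z * z' = 1) :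
    fp i x x' y y' z' * (-fr i w x x' y' z) + fr i w x x' y' z * fp i x x' y' y z'
      + fq i w x' y y' z * gs i x' y' z' * x + fs i x' y z' * (-fq i w x y' y z) * (y' * z) = 0 := by
  unfold fp fq fr fs gs
  grind

lemma uv3 (hw : w * w = i) (hi : i * i = -1) (hx : x * x' = 1) (hy : y * y' = 1) (hz : z * z' = 1) :
    fp i x x' y y' z' * gs i x' y z + fs i x' y z' * fp i x x' y y' z
      + fq i w x' y y' z * (-fr i w x x' y z') + fr i w x x' y' z * (-fq i w x y y' z') * (x' * y * z') = 0 := by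
  unfold fp fq fr fs gs
  grind

lemma vu0 (hw : w * w = i) (hi : i * i = -1) (hx : x * x' = 1) (hy : y * y' = 1) (hz : z * z' = 1) :
    fp i x' x y' y z * fp i x x' y y' z' + (-fq i w x' y y' z) * fq i w x' y' y z' * x
      + (-fr i w x x' y' z) * fr i w x' x y' z' * y + gs i x' y z * fs i x y' z' * z = 1 := by
  unfold fp fq fr fs gs
  grind

lemma vu1 (hw : w * w = i) (hi : i * i = -1) (hx : x * x' = 1) (hy : y * y' = 1) (hz : z * z' = 1) :
    fp i x' x y' y z * fq i w x' y y' z + (-fq i w x' y y' z) * fp i x x' y' y z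
      + (-fr i w x x' y' z) * fs i x y z * (x' * z') + gs i x' y z * fr i w x' x y z * y' = 0 := by
  unfold fp fq fr fs gs
  grind

lemma vu2 (hw : w * w = i) (hi : i * i = -1) (hx : x * x' = 1) (hy : y * y' = 1) (hz : z * z' = 1) :
    fp i x' x y' y z * fr i w x x' y' z + (-fr i w x x' y' z) * fp i x' x y y' z
      + (-fq i w x' y y' z) * fs i x' y' z * x + gs i x' y z * fq i w x y' y z * (y' * z) = 0 := by
  unfold fp fq fr fs gs
  grind

lemma vu3 (hw : w * w = i) (hi : i * i = -1) (hx : x * x' = 1) (hy : y * y' = 1) (hz : z * z' = 1) :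
    fp i x' x y' y z * fs i x' y z' + gs i x' y z * fp i x' x y' y z'
      + (-fq i w x' y y' z) * fr i w x x' y z' + (-fr i w x x' y' z) * fq i w x y y' z' * (x' * y * z') = 0 := by
  unfold fp fq fr fs gs
  grind


variable {M : Type*} [Ring M] (f : S →+* M) {A B : M}

/-- multiplication in the crossed product -/
lemma prod_formula {p q r s P Q R T Pa Qa Ra Ta Pb Qb Rb Tb Pc Qc Rc Tc : S}
    (aP : SemiconjBy A (f P) (f Pa)) (aQ : SemiconjBy A (f Q) (f Qa))
    (aR : SemiconjBy A (f R) (f Ra)) (aT : SemiconjBy A (f T) (f Ta))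
    (bP : SemiconjBy B (f P) (f Pb)) (bQ : SemiconjBy B (f Q) (f Qb))
    (bR : SemiconjBy B (f R) (f Rb)) (bT : SemiconjBy B (f T) (f Tb))
    (cP : SemiconjBy (A * B) (f P) (f Pc)) (cQ : SemiconjBy (A * B) (f Q) (f Qc))
    (cR : SemiconjBy (A * B) (f R) (f Rc)) (cT : SemiconjBy (A * B) (f T) (f Tc))
    (t11 : A * A = f x) (t22 : B * B = f y) (t33 : (A * B) * (A * B) = f z)
    (t13 : A * (A * B) = f x * B) (t21 : B * A = f (x' * y * z') * (A * B))
    (t23 : B * (A * B) = f (x' * z') * A) (t31 : A * B * A = f (y' * z) * B)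
    (t32 : A * B * B = f y' * A)
    (h0 : p * P + q * Qa * x + r * Rb * y + s * Tc * z = 1)
    (h1 : p * Q + q * Pa + r * Tb * (x' * z') + s * Rc * y' = 0)
    (h2 : p * R + r * Pb + q * Ta * x + s * Qc * (y' * z) = 0)
    (h3 : p * T + s * Pc + q * Ra + r * Qb * (x' * y * z') = 0) :
    (f p + f q * A + f r * B + f s * (A * B)) * (f P + f Q * A + f R * B + f T * (A * B)) = 1 := by
  have key : ∀ (C D : M) (u v v' : S), SemiconjBy C (f v) (f v') →
      f u * C * (f v * D) = f (u * v') * (C * D) := by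
    intro C D u v v' h
    rw [map_mul, mul_assoc, ← mul_assoc C, h.eq]
    simp only [mul_assoc]
  have key1 : ∀ (C : M) (u v v' : S), SemiconjBy C (f v) (f v') →
      f u * C * f v = f (u * v') * C := by
    intro C u v v' h
    rw [map_mul, mul_assoc, h.eq, mul_assoc]
  have k0 : ∀ (D : M) (u v : S), f u * (f v * D) = f (u * v) * D := by
    intro D u v
    rw [map_mul, mul_assoc]
  have e : (f p + f q * A + f r * B + f s * (A * B)) * (f P + f Q * A + f R * B + f T * (A * B))
      = f (p * P + q * Qa * x + r * Rb * y + s * Tc * z)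
      + f (p * Q + q * Pa + r * Tb * (x' * z') + s * Rc * y') * A
      + f (p * R + r * Pb + q * Ta * x + s * Qc * (y' * z)) * B
      + f (p * T + s * Pc + q * Ra + r * Qb * (x' * y * z')) * (A * B) := by
    simp only [mul_add, add_mul, k0, key1 _ _ _ _ aP, key1 _ _ _ _ bP, key1 _ _ _ _ cP,
      key _ _ _ _ _ aQ, key _ _ _ _ _ bQ, key _ _ _ _ _ cQ,
      key _ _ _ _ _ aR, key _ _ _ _ _ bR, key _ _ _ _ _ cR,
      key _ _ _ _ _ aT, key _ _ _ _ _ bT, key _ _ _ _ _ cT,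
      t11, t22, t33, t13, t21, t23, t31, t32, ← map_mul, map_add f]
    abel
  rw [e, h0, h1, h2, h3]
  simp

variable {C : M} {X X' Y Y' Z Z' : S}

lemma sc_p (ci : SemiconjBy C (f i) (f i))
    (cx : SemiconjBy C (f x) (f X)) (cx' : SemiconjBy C (f x') (f X'))
    (cy : SemiconjBy C (f y) (f Y)) (cy' : SemiconjBy C (f y') (f Y'))
    (cz' : SemiconjBy C (f z') (f Z')) :
    SemiconjBy C (f (fp i x x' y y' z')) (f (fp i X X' Y Y' Z')) := by
  simp only [fp, map_add, map_sub, map_mul, map_neg, map_one]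
  repeat' first
    | assumption
    | exact SemiconjBy.one_right _
    | apply SemiconjBy.add_right
    | apply SemiconjBy.sub_right
    | apply SemiconjBy.mul_right
    | apply SemiconjBy.neg_right

lemma sc_q (ci : SemiconjBy C (f i) (f i)) (cw : SemiconjBy C (f w) (f w))
    (cx' : SemiconjBy C (f x') (f X'))
    (cy : SemiconjBy C (f y) (f Y)) (cy' : SemiconjBy C (f y') (f Y'))
    (cz : SemiconjBy C (f z) (f Z)) :
    SemiconjBy C (f (fq i w x' y y' z)) (f (fq i w X' Y Y' Z)) := by
  simp only [fq, map_add, map_sub, map_mul, map_neg, map_one]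
  repeat' first
    | assumption
    | exact SemiconjBy.one_right _
    | apply SemiconjBy.add_right
    | apply SemiconjBy.sub_right
    | apply SemiconjBy.mul_right
    | apply SemiconjBy.neg_right

lemma sc_r (ci : SemiconjBy C (f i) (f i)) (cw : SemiconjBy C (f w) (f w))
    (cx : SemiconjBy C (f x) (f X)) (cx' : SemiconjBy C (f x') (f X'))
    (cy' : SemiconjBy C (f y') (f Y'))
    (cz : SemiconjBy C (f z) (f Z)) :
    SemiconjBy C (f (fr i w x x' y' z)) (f (fr i w X X' Y' Z)) := by
  simp only [fr, map_add, map_sub, map_mul, map_neg, map_one]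
  repeat' first
    | assumption
    | exact SemiconjBy.one_right _
    | apply SemiconjBy.add_right
    | apply SemiconjBy.sub_right
    | apply SemiconjBy.mul_right
    | apply SemiconjBy.neg_right

lemma sc_s (ci : SemiconjBy C (f i) (f i))
    (cx' : SemiconjBy C (f x') (f X'))
    (cy : SemiconjBy C (f y) (f Y))
    (cz' : SemiconjBy C (f z') (f Z')) :
    SemiconjBy C (f (fs i x' y z')) (f (fs i X' Y Z')) := by
  simp only [fs, map_add, map_sub, map_mul, map_neg, map_one]
  repeat' first
    | assumption
    | exact SemiconjBy.one_right _
    | apply SemiconjBy.add_right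
    | apply SemiconjBy.sub_right
    | apply SemiconjBy.mul_right
    | apply SemiconjBy.neg_right

lemma sc_gs (ci : SemiconjBy C (f i) (f i))
    (cx' : SemiconjBy C (f x') (f X'))
    (cy : SemiconjBy C (f y) (f Y))
    (cz : SemiconjBy C (f z) (f Z)) :
    SemiconjBy C (f (gs i x' y z)) (f (gs i X' Y Z)) := by
  simp only [gs, map_add, map_sub, map_mul, map_neg, map_one]
  repeat' first
    | assumption
    | exact SemiconjBy.one_right _
    | apply SemiconjBy.add_right
    | apply SemiconjBy.sub_right
    | apply SemiconjBy.mul_right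
    | apply SemiconjBy.neg_right

lemma sc_neg {u v : S} (h : SemiconjBy C (f u) (f v)) : SemiconjBy C (f (-u)) (f (-v)) := by
  simpa using h

lemma isUnit_aux (hw : w * w = i) (hi : i * i = -1) (hx : x * x' = 1) (hy : y * y' = 1) (hz : z * z' = 1)
    (cw : ∀ m, Commute m (f w))
    (kax : SemiconjBy A (f x) (f x))
    (kax' : SemiconjBy A (f x') (f x'))
    (kay : SemiconjBy A (f y) (f y'))
    (kay' : SemiconjBy A (f y') (f y))
    (kaz : SemiconjBy A (f z) (f z'))
    (kaz' : SemiconjBy A (f z') (f z))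
    (kbx : SemiconjBy B (f x) (f x'))
    (kbx' : SemiconjBy B (f x') (f x))
    (kby : SemiconjBy B (f y) (f y))
    (kby' : SemiconjBy B (f y') (f y'))
    (kbz : SemiconjBy B (f z) (f z'))
    (kbz' : SemiconjBy B (f z') (f z))
    (t11 : A * A = f x) (t22 : B * B = f y) (t33 : (A * B) * (A * B) = f z)
    (t13 : A * (A * B) = f x * B) (t21 : B * A = f (x' * y * z') * (A * B))
    (t23 : B * (A * B) = f (x' * z') * A) (t31 : A * B * A = f (y' * z) * B)
    (t32 : A * B * B = f y' * A) :
    IsUnit (f (fp i x x' y y' z') + f (fq i w x' y y' z) * A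
      + f (fr i w x x' y' z) * B + f (fs i x' y z') * (A * B)) := by
  have ci : ∀ m, Commute m (f i) := by
    intro m; rw [← hw, map_mul]; exact (cw m).mul_right (cw m)
  have cia : SemiconjBy A (f i) (f i) := ci A
  have cib : SemiconjBy B (f i) (f i) := ci B
  have cic : SemiconjBy (A * B) (f i) (f i) := ci _
  have cwa : SemiconjBy A (f w) (f w) := cw A
  have cwb : SemiconjBy B (f w) (f w) := cw B
  have cwc : SemiconjBy (A * B) (f w) (f w) := cw _
  have kcx := kax'.mul_left kbx
  have kcx' := kax.mul_left kbx'
  have kcy := kay.mul_left kby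
  have kcy' := kay'.mul_left kby'
  have kcz := kaz'.mul_left kbz
  have kcz' := kaz.mul_left kbz'
  refine ⟨⟨f (fp i x x' y y' z') + f (fq i w x' y y' z) * A
      + f (fr i w x x' y' z) * B + f (fs i x' y z') * (A * B),
      f (fp i x' x y' y z) + f ((-fq i w x' y y' z)) * A
      + f ((-fr i w x x' y' z)) * B + f (gs i x' y z) * (A * B), ?_, ?_⟩, rfl⟩
  · exact prod_formula f (sc_p f cia kax' kax kay' kay kaz) (sc_neg f (sc_q f cia cwa kax' kay kay' kaz)) (sc_neg f (sc_r f cia cwa kax kax' kay' kaz)) (sc_gs f cia kax' kay kaz)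
      (sc_p f cib kbx' kbx kby' kby kbz) (sc_neg f (sc_q f cib cwb kbx' kby kby' kbz)) (sc_neg f (sc_r f cib cwb kbx kbx' kby' kbz)) (sc_gs f cib kbx' kby kbz)
      (sc_p f cic kcx' kcx kcy' kcy kcz) (sc_neg f (sc_q f cic cwc kcx' kcy kcy' kcz)) (sc_neg f (sc_r f cic cwc kcx kcx' kcy' kcz)) (sc_gs f cic kcx' kcy kcz)
      t11 t22 t33 t13 t21 t23 t31 t32
      (uv0 hw hi hx hy hz) (uv1 hw hi hx hy hz) (uv2 hw hi hx hy hz) (uv3 hw hi hx hy hz)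
  · exact prod_formula f (sc_p f cia kax kax' kay kay' kaz') (sc_q f cia cwa kax' kay kay' kaz) (sc_r f cia cwa kax kax' kay' kaz) (sc_s f cia kax' kay kaz')
      (sc_p f cib kbx kbx' kby kby' kbz') (sc_q f cib cwb kbx' kby kby' kbz) (sc_r f cib cwb kbx kbx' kby' kbz) (sc_s f cib kbx' kby kbz')
      (sc_p f cic kcx kcx' kcy kcy' kcz') (sc_q f cic cwc kcx' kcy kcy' kcz) (sc_r f cic cwc kcx kcx' kcy' kcz) (sc_s f cic kcx' kcy kcz')
      t11 t22 t33 t13 t21 t23 t31 t32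
      (vu0 hw hi hx hy hz) (vu1 hw hi hx hy hz) (vu2 hw hi hx hy hz) (vu3 hw hi hx hy hz)

end alg

lemma P_h1 : pb⁻¹ * pa ^ 2 * pb * pa ^ 2 = 1 :=
  PresentedGroup.one_of_mem (rels := Prels) (Set.mem_insert _ _)

lemma P_h2 : pa⁻¹ * pb ^ 2 * pa * pb ^ 2 = 1 :=
  PresentedGroup.one_of_mem (rels := Prels) (Set.mem_insert_of_mem _ rfl)

lemma Gc_mul (g h : P) : Gc (g * h) = Gc g * Gc h := map_mul _ _ _

lemma Gc_one : Gc 1 = 1 := map_one _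

lemma Gc_semiconj {g h k : P} (H : SemiconjBy g h k) : SemiconjBy (Gc g) (Gc h) (Gc k) := by
  unfold SemiconjBy
  rw [← Gc_mul, ← Gc_mul, H.eq]

lemma s_bx : SemiconjBy pb px px⁻¹ := grp_bx P_h1
lemma s_ay : SemiconjBy pa py py⁻¹ := grp_bx P_h2
lemma s_az : SemiconjBy pa pz pz⁻¹ := grp_az P_h1 P_h2
lemma s_bz : SemiconjBy pb pz pz⁻¹ := grp_bz P_h1 P_h2
lemma s_ax : SemiconjBy pa px px := (Commute.refl pa).pow_right 2
lemma s_by : SemiconjBy pb py py := (Commute.refl pb).pow_right 2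

lemma inv_sc {g h k : P} (H : SemiconjBy g h k⁻¹) : SemiconjBy g h⁻¹ k := by
  simpa using H.inv_right

lemma c_xy : Commute px py := by
  have := s_ay
  unfold px; rw [sq]
  exact (inv_sc s_ay).mul_left s_ay

lemma c_xz : Commute px pz := by
  unfold px; rw [sq]
  exact (inv_sc s_az).mul_left s_az

lemma c_yz : Commute py pz := by
  unfold py; rw [sq]
  exact (inv_sc s_bz).mul_left s_bz

def gens : Set (MonoidAlgebra ℂ P) := {Gc px, Gc px⁻¹, Gc py, Gc py⁻¹, Gc pz, Gc pz⁻¹}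

lemma Gc_comm {g h : P} (H : Commute g h) : Gc g * Gc h = Gc h * Gc g := Gc_semiconj H

lemma gens_comm : ∀ u ∈ gens, ∀ v ∈ gens, u * v = v * u := by
  have h1 := c_xy
  have h2 := c_xz
  have h3 := c_yz
  have h1' := c_xy.symm
  have h2' := c_xz.symm
  have h3' := c_yz.symm
  intro u hu v hv
  simp only [gens, Set.mem_insert_iff, Set.mem_singleton_iff] at hu hv
  rcases hu with rfl | rfl | rfl | rfl | rfl | rfl <;>
  rcases hv with rfl | rfl | rfl | rfl | rfl | rfl <;>
  apply Gc_comm <;> simp [Commute.inv_left_iff, Commute.inv_right_iff, *]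

lemma t_13 : pa * (pa * pb) = px * pb := by rw [px, sq, mul_assoc]
lemma t_32 : pa * pb * pb = py⁻¹ * pa := by
  rw [← s_ay.eq, py, sq, mul_assoc]
lemma t_31 : pa * pb * pa = py⁻¹ * pz * pb := by
  have h : py * (pa * pb * pa * pb) = pz * py := by
    rw [← c_yz.eq, pz, sq]; simp only [mul_assoc]
  have h2 : py * (pa * pb * pa) = pz * pb := by
    rw [← mul_left_inj pb, mul_assoc, h, py, sq, mul_assoc]
  rw [mul_assoc py⁻¹, ← h2, inv_mul_cancel_left]
lemma t_21 : pb * pa = px⁻¹ * py * pz⁻¹ * (pa * pb) := by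
  have h : pa * (pb * pa) = py⁻¹ * pz * pb := by rw [← t_31, mul_assoc]
  have h2 : pa * (px⁻¹ * py * pz⁻¹ * (pa * pb)) = py⁻¹ * pz * pb := by
    have e1 : pa * px⁻¹ = px⁻¹ * pa := s_ax.inv_right.eq
    have e2 : pa * py = py⁻¹ * pa := s_ay.eq
    have e3 : pa * pz⁻¹ = pz * pa := (inv_sc s_az).eq
    calc pa * (px⁻¹ * py * pz⁻¹ * (pa * pb)) = (pa * px⁻¹) * py * pz⁻¹ * (pa * pb) := by
          simp only [mul_assoc]
      _ = px⁻¹ * (pa * py) * pz⁻¹ * (pa * pb) := by rw [e1]; simp only [mul_assoc]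
      _ = px⁻¹ * py⁻¹ * (pa * pz⁻¹) * (pa * pb) := by rw [e2]; simp only [mul_assoc]
      _ = px⁻¹ * (py⁻¹ * pz * px) * pb := by rw [e3, px, sq]; simp only [mul_assoc]
      _ = py⁻¹ * pz * pb := by
          rw [← (c_xy.inv_right.mul_right c_xz).eq, inv_mul_cancel_left]
  exact mul_left_cancel (h.trans h2.symm)
lemma t_23 : pb * (pa * pb) = px⁻¹ * pz⁻¹ * pa := by
  have e : pz⁻¹ * (pa * py) = py⁻¹ * (pz⁻¹ * pa) := by
    rw [s_ay.eq, ← mul_assoc, ← mul_assoc, c_yz.inv_inv.eq]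
  calc pb * (pa * pb) = (pb * pa) * pb := by rw [mul_assoc]
    _ = px⁻¹ * py * (pz⁻¹ * (pa * py)) := by
        rw [t_21]; nth_rewrite 3 [py]; rw [sq]; simp only [mul_assoc]
    _ = px⁻¹ * pz⁻¹ * pa := by rw [e]; simp only [mul_assoc, mul_inv_cancel_left]

lemma unit_part (ζ : ℂ) (hζ : ζ ^ 4 = -1) : IsUnit (uC ζ) := by
  let S := Algebra.adjoin ℂ gens
  let : CommRing S :=
    { S.toRing with
      mul_comm := by
        have := Algebra.isMulCommutative_adjoin ℂ gens_comm
        intro u v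
        exact this.is_comm.comm u v }
  let f : S →+* MonoidAlgebra ℂ P := S.val.toRingHom
  have mem : ∀ u ∈ gens, u ∈ S := fun u hu => Algebra.subset_adjoin hu
  let x : S := ⟨Gc px, mem _ (by simp [gens])⟩
  let x' : S := ⟨Gc px⁻¹, mem _ (by simp [gens])⟩
  let y : S := ⟨Gc py, mem _ (by simp [gens])⟩
  let y' : S := ⟨Gc py⁻¹, mem _ (by simp [gens])⟩
  let z : S := ⟨Gc pz, mem _ (by simp [gens])⟩
  let z' : S := ⟨Gc pz⁻¹, mem _ (by simp [gens])⟩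
  let w : S := ⟨algebraMap ℂ _ ζ, S.algebraMap_mem ζ⟩
  let i : S := ⟨algebraMap ℂ _ (ζ ^ 2), S.algebraMap_mem _⟩
  have fx : f x = Gc px := rfl
  have fx' : f x' = Gc px⁻¹ := rfl
  have fy : f y = Gc py := rfl
  have fy' : f y' = Gc py⁻¹ := rfl
  have fz : f z = Gc pz := rfl
  have fz' : f z' = Gc pz⁻¹ := rfl
  have fw : f w = algebraMap ℂ _ ζ := rfl
  have fi : f i = algebraMap ℂ _ (ζ ^ 2) := rfl
  have finj : Function.Injective f := Subtype.val_injective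
  clear_value f x x' y y' z z' w i
  have key := isUnit_aux f (w := w) (i := i) (x := x) (x' := x') (y := y) (y' := y') (z := z)
    (z' := z') (A := Gc pa) (B := Gc pb)
    (finj (by rw [map_mul, fw, fi, ← map_mul, sq]))
    (finj (by rw [map_mul, fi, ← map_mul, ← pow_add, hζ, map_neg, map_neg, map_one, map_one]))
    (finj (by rw [map_mul, fx, fx', ← Gc_mul, mul_inv_cancel, Gc_one, map_one]))
    (finj (by rw [map_mul, fy, fy', ← Gc_mul, mul_inv_cancel, Gc_one, map_one]))
    (finj (by rw [map_mul, fz, fz', ← Gc_mul, mul_inv_cancel, Gc_one, map_one]))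
    (by intro m; rw [fw]; exact (Algebra.commutes ζ m).symm)
    (by rw [fx]; exact Gc_semiconj s_ax)
    (by rw [fx']; exact Gc_semiconj s_ax.inv_right)
    (by rw [fy, fy']; exact Gc_semiconj s_ay)
    (by rw [fy, fy']; exact Gc_semiconj (inv_sc s_ay))
    (by rw [fz, fz']; exact Gc_semiconj s_az)
    (by rw [fz, fz']; exact Gc_semiconj (inv_sc s_az))
    (by rw [fx, fx']; exact Gc_semiconj s_bx)
    (by rw [fx, fx']; exact Gc_semiconj (inv_sc s_bx))
    (by rw [fy]; exact Gc_semiconj s_by)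
    (by rw [fy']; exact Gc_semiconj s_by.inv_right)
    (by rw [fz, fz']; exact Gc_semiconj s_bz)
    (by rw [fz, fz']; exact Gc_semiconj (inv_sc s_bz))
    (by rw [fx, ← Gc_mul, px, sq])
    (by rw [fy, ← Gc_mul, py, sq])
    (by rw [fz, ← Gc_mul, ← Gc_mul, pz, sq])
    (by rw [fx]; simp only [← Gc_mul]; rw [t_13])
    (by rw [map_mul, map_mul, fx', fy, fz']; simp only [← Gc_mul]; rw [t_21])
    (by rw [map_mul, fx', fz']; simp only [← Gc_mul]; rw [t_23])
    (by rw [map_mul, fy', fz]; simp only [← Gc_mul]; rw [t_31])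
    (by rw [fy']; simp only [← Gc_mul]; rw [t_32])
  convert key using 1
  simp only [uC, fp, fq, fr, fs, map_add, map_sub, map_mul, map_neg, map_one, fx, fx', fy, fy',
    fz, fz', fw, fi, Gc_mul, Algebra.smul_def, sq pz, mul_assoc]

/-- A finite dihedral quotient. -/
def toD : P →* DihedralGroup 8 :=
  PresentedGroup.toGroup (rels := Prels)
    (f := ![DihedralGroup.r 1, DihedralGroup.sr 0]) (by
      intro r hr
      rcases hr with rfl | rfl
      · simp
      · simp; decide)

lemma toD_a : toD pa = DihedralGroup.r 1 := by simp [toD, pa]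
lemma toD_b : toD pb = DihedralGroup.sr 0 := by simp [toD, pb]

lemma nontriv (ζ : ℂ) (hζ : ζ ≠ 0) (c : ℂ) (g : P) : uC ζ ≠ MonoidAlgebra.single g c := by
  intro h
  have hx : toD px = DihedralGroup.r 2 := by rw [px, map_pow, toD_a]; decide
  have hy : toD py = 1 := by rw [py, map_pow, toD_b]; decide
  have hz : toD pz = 1 := by rw [pz, map_pow, map_mul, toD_a, toD_b]; decide
  have h' := congrArg (MonoidAlgebra.mapDomainAlgHom ℂ ℂ toD) h
  have hG : ∀ g, MonoidAlgebra.mapDomainAlgHom ℂ ℂ toD (Gc g)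
      = MonoidAlgebra.single (toD g) 1 := by
    intro g; simp [Gc]
  simp only [uC, map_add, map_sub, map_neg, map_smul, map_mul, map_one, hG, hx, hy, hz, toD_a,
    toD_b, map_inv, map_pow] at h'
  simp only [MonoidAlgebra.one_def, add_mul, sub_mul, neg_mul, smul_mul_assoc,
    MonoidAlgebra.single_mul_single, MonoidAlgebra.mapDomainAlgHom_apply,
    MonoidAlgebra.mapDomain_single] at h'
  have k1 := congrArg (fun m => m.coeff (DihedralGroup.r 0)) h'
  have k2 := congrArg (fun m => m.coeff (DihedralGroup.r 2)) h'
  have n1 : (2 : ZMod 8) ≠ 0 := by decide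
  have n2 : (-2 : ZMod 8) ≠ 0 := by decide
  have n3 : (-2 + 1 : ZMod 8) ≠ 0 := by decide
  have n4 : (1 : ZMod 8) ≠ 0 := by decide
  have n5 : (-2 : ZMod 8) ≠ 2 := by decide
  have n6 : (-2 + 1 : ZMod 8) ≠ 2 := by decide
  have n7 : (1 : ZMod 8) ≠ 2 := by decide
  have n8 : (0 : ZMod 8) ≠ 2 := by decide
  simp [MonoidAlgebra.coeff_single, Finsupp.single_apply, DihedralGroup.one_def,
    n1, n2, n3, n4, n5, n6, n7, n8, -DihedralGroup.r_zero] at k1 k2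
  by_cases e1 : toD g = DihedralGroup.r 0
  · rw [e1, if_neg] at k2
    · exact hζ (pow_eq_zero_iff (two_ne_zero) |>.1 k2)
    · decide
  · rw [if_neg e1] at k1
    exact one_ne_zero k1

/-- If `ζ₈` is a primitive 8th root of unity then the explicit element above is a
non-trivial unit of `ℂ[P]`. -/
theorem complex_nontrivial_unit (ζ : ℂ) (hζ : IsPrimitiveRoot ζ 8) :
    IsUnit (uC ζ) ∧
      ¬∃ (c : ℂˣ) (g : P), uC ζ = MonoidAlgebra.single g (c : ℂ) := by 
  have h4 : ζ ^ 4 = -1 := by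
    have h8 : (ζ ^ 4) ^ 2 = 1 := by rw [← pow_mul]; exact hζ.pow_eq_one
    rcases eq_or_eq_neg_of_sq_eq_sq (ζ ^ 4) 1 (by rw [h8, one_pow]) with h | h
    · exact absurd h (hζ.pow_ne_one_of_pos_of_lt (by norm_num) (by norm_num))
    · exact h
  refine ⟨unit_part ζ h4, ?_⟩
  rintro ⟨c, g, h⟩
  exact nontriv ζ (hζ.ne_zero (by norm_num)) c g h
end
end

section
/- The group ring ℂ[P] contains a unit that is not a trivial unit. -/
noncomputable section

set_option maxHeartbeats 4000000

theorem tau_rel {R : Type*} [Ring R] (x xi y yi z zi a b : R)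
  (h1 : x*xi=1) (h2 : xi*x=1) (h3 : y*yi=1) (h4 : yi*y=1) (h5 : z*zi=1) (h6 : zi*z=1)
  (yx : y*x=x*y) (yxi : y*xi=xi*y) (yix : yi*x=x*yi) (yixi : yi*xi=xi*yi)
  (zx : z*x=x*z) (zxi : z*xi=xi*z) (zix : zi*x=x*zi) (zixi : zi*xi=xi*zi)
  (zy : z*y=y*z) (zyi : z*yi=yi*z) (ziy : zi*y=y*zi) (ziyi : zi*yi=yi*zi)
  (ax : a*x=x*a) (axi : a*xi=xi*a) (ay : a*y=yi*a) (ayi : a*yi=y*a) (az : a*z=zi*a) (azi : a*zi=z*a)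
  (bx : b*x=xi*b) (bxi : b*xi=x*b) (byy : b*y=y*b) (byi : b*yi=yi*b) (bz : b*z=zi*b) (bzi : b*zi=z*b)
  (aa : a*a=x) (bb : b*b=y) (ba : b*a=xi*(y*(zi*(a*b))))
  (t0 t1 : R) (ht0 : t0 = 1+1+1+1+x+xi+y+yi+(1+x+y+x*y)*(1+zi)*a*b)
  (ht1 : t1 = (1+1+xi*y+yi+xi+xi+xi*z+z)*a+(z+x*yi*z+x*yi*z+x*z+x*z+x*x*yi*z+x+x*yi)*b) :
  t0*t1=t1*t0 ∧ t0*t0 = t1*t1+(1+1-z-zi)*t0 ∧ z*t0=t0*z ∧ z*t1=t1*zi ∧ zi*t1=t1*z := by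
  have e : ∀ {u v w : R}, u*v=w → ∀ k, u*(v*k)=w*k := fun h k => by rw [← mul_assoc, h]
  subst ht0 ht1
  refine ⟨?_,?_,?_,?_,?_⟩ <;>
  · simp only [mul_add, add_mul, sub_mul, mul_assoc, mul_one, one_mul,
     h1,h2,h3,h4,h5,h6,yx,yxi,yix,yixi,zx,zxi,zix,zixi,zy,zyi,ziy,ziyi,ax,axi,ay,ayi,az,azi,bx,bxi,byy,byi,bz,bzi,aa,bb,ba,
     e h1,e h2,e h3,e h4,e h5,e h6,e yx,e yxi,e yix,e yixi,e zx,e zxi,e zix,e zixi,e zy,e zyi,e ziy,e ziyi,e ax,e axi,e ay,e ayi,e az,e azi,e bx,e bxi,e byy,e byi,e bz,e bzi,e aa,e bb,e ba]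
    try abel

theorem fact1 {S : Type*} [CommRing S] (w Z : S) (hw : w^6=w^3-1) :
  (Z^4-(1+2*w-w^3-w^4-w^5)*Z^3+(1+w-2*w^3-2*w^4-w^5)*Z^2-(-1-w^3-w^4-w^5)*Z-w) = (Z-w)*(Z+w^7)*(Z+w^6)*(Z+w^5) := by
  grind
theorem fact2 {S : Type*} [CommRing S] (w Z : S) (hw : w^6=w^3-1) :
  (1-w*Z)*(1+w^7*Z)*(1+w^6*Z)*(1+w^5*Z)*w^8 = (Z+w^8)*(Z-w^2)*(Z-w^3)*(Z-w^4) := by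
  grind
theorem fact3 {S : Type*} [CommRing S] (w Z : S) (hw : w^6=w^3-1) :
  (Z-w)*(Z+w^7)*(Z+w^6)*(Z+w^5)*((Z+w^8)*(Z-w^2)*(Z-w^3)*(Z-w^4))*((Z^2-1)*(Z^2+Z+1)*((Z-w^5)*(Z+w^4)*(Z-w^7)*(Z+w^2)*(Z-w^8)*(Z+w))) = Z^18-1 := by
  have h1 : (Z-w)*(Z+w^8)*((Z-w^5)*(Z+w^4)*((Z-w^7)*(Z+w^2))) = Z^6-Z^3+1 := by grind
  have h2 : (Z+w)*(Z-w^8)*((Z+w^5)*(Z-w^4)*((Z+w^7)*(Z-w^2))) = Z^6+Z^3+1 := by grind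
  have h3 : (Z+w^6)*(Z-w^3)=Z^2-Z+1 := by grind
  rw [show Z^18-1 = (Z^6-Z^3+1)*(Z^6+Z^3+1)*(Z^2-Z+1)*((Z^2-1)*(Z^2+Z+1)) by ring, ← h1, ← h2, ← h3]
  generalize (Z^2-1)*(Z^2+Z+1) = q
  ac_rfl

open Polynomial in
/-- The polynomial `F`, with roots `w, w⁻², w⁻³, w⁻⁴` (where `w` is a primitive root of unity of order 18). -/
def polyF (w : ℂ) : ℂ[X] :=
  X^4 - C (1+2*w-w^3-w^4-w^5) * X^3 + C (1+w-2*w^3-2*w^4-w^5) * X^2 - C (-1-w^3-w^4-w^5) * X - C w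

open Polynomial in
/-- The polynomial `G`. -/
def polyG (w : ℂ) : ℂ[X] := C (1+w) * (X^3 - X)

theorem semiconj_aeval {R : Type*} [Ring R] [Algebra ℂ R] (t u v : R) (h : t * u = v * t)
    (f : Polynomial ℂ) : t * Polynomial.aeval u f = Polynomial.aeval v f * t := by
  induction f using Polynomial.induction_on' with
  | add p q hp hq => simp [mul_add, add_mul, hp, hq]
  | monomial n a =>
    have h' : SemiconjBy t u v := h
    simp only [Polynomial.aeval_monomial]
    rw [← mul_assoc, ← Algebra.commutes a t, mul_assoc, mul_assoc, (h'.pow_right n).eq]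

abbrev SZ := MonoidAlgebra ℂ (Multiplicative ℤ)

theorem comm_rel {S : Type*} [CommRing S] (w Z Zi e1 e2 e3 : S) (hZ : Z * Zi = 1)
    (he : e1 - e3 = 2 * (1 + w)) :
    (Z^4 - e1*Z^3+e2*Z^2-e3*Z-w) * ((1+w)*(Zi^3-Zi)) + ((1+w)*(Z^3-Z)) *
      (Zi^4 - e1*Zi^3+e2*Zi^2-e3*Zi-w)
      + (1+1-Z-Zi) * (((1+w)*(Z^3-Z)) * ((1+w)*(Zi^3-Zi))) = 0 := by
  grind

theorem comm_rel2 {S : Type*} [CommRing S] (w Z Zi : S) (hZ : Z * Zi = 1) (hw : w^6=w^3-1) :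
    1 + (Z^4-(1+2*w-w^3-w^4-w^5)*Z^3+(1+w-2*w^3-2*w^4-w^5)*Z^2-(-1-w^3-w^4-w^5)*Z-w) *
     (Zi^4-(1+2*w-w^3-w^4-w^5)*Zi^3+(1+w-2*w^3-2*w^4-w^5)*Zi^2-(-1-w^3-w^4-w^5)*Zi-w) *
     (Z^4 * w^8 * ((Z^2-1)*(Z^2+Z+1)*((Z-w^5)*(Z+w^4)*(Z-w^7)*(Z+w^2)*(Z-w^8)*(Z+w)))) = Z^18 := by
  rw [fact1 w Z hw, fact1 w Zi hw]
  have h4 : ((Zi-w)*(Zi+w^7)*(Zi+w^6)*(Zi+w^5)) * Z^4 =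
      (1-w*Z)*(1+w^7*Z)*(1+w^6*Z)*(1+w^5*Z) := by
    have e (c : S) : (Zi + c) * Z = 1 + c * Z := by linear_combination hZ
    have e1 : (Zi - w) * Z = 1 - w * Z := by linear_combination hZ
    rw [← e, ← e, ← e, ← e1]
    generalize Zi - w = q1
    generalize Zi + w^7 = q2
    generalize Zi + w^6 = q3
    generalize Zi + w^5 = q4
    ring
  have h5 := fact3 w Z hw
  rw [← fact2 w Z hw, ← h4] at h5
  generalize (Z-w)*(Z+w^7)*(Z+w^6)*(Z+w^5) = p1 at *
  generalize (Zi-w)*(Zi+w^7)*(Zi+w^6)*(Zi+w^5) = p2 at *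
  generalize (Z^2-1)*(Z^2+Z+1)*((Z-w^5)*(Z+w^4)*(Z-w^7)*(Z+w^2)*(Z-w^8)*(Z+w)) = p3 at *
  linear_combination h5

theorem core_unit {R : Type*} [Ring R] [Algebra ℂ R] (w : ℂ) (hw : w^6=w^3-1)
    (t0 t1 z zi : R) (h5 : z*zi=1) (h6 : zi*z=1)
    (h01 : t0*t1=t1*t0) (h00 : t0*t0 = t1*t1+(1+1-z-zi)*t0) (hz0 : z*t0=t0*z)
    (hz1 : z*t1=t1*zi) (hzi1 : zi*t1=t1*z)
    (j : SZ →ₐ[ℂ] R) (hj : j (MonoidAlgebra.single (Multiplicative.ofAdd 1) 1) = z)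
    (hji : j (MonoidAlgebra.single (Multiplicative.ofAdd (-1)) 1) = zi) :
    ∃ u : Rˣ, (Polynomial.aeval z (polyF w) + Polynomial.aeval z (polyG w) * (t0 + t1)) * (u : R)
      = z^18 * (Polynomial.aeval z (polyF w) + Polynomial.aeval z (polyG w) * (t0 + t1)) := by
  set Z : SZ := MonoidAlgebra.single (Multiplicative.ofAdd 1) 1 with hZd
  set Zi : SZ := MonoidAlgebra.single (Multiplicative.ofAdd (-1)) 1 with hZid
  have hZZ : Z * Zi = 1 := by
    rw [hZd, hZid, MonoidAlgebra.single_mul_single, ← ofAdd_add]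
    simp [MonoidAlgebra.one_def]
  have hzi0 : zi*t0 = t0*zi := by
    calc zi*t0 = zi*(t0*z)*zi := by rw [mul_assoc, mul_assoc, h5, mul_one]
      _ = t0*zi := by rw [← hz0, ← mul_assoc, h6, one_mul]
  have av (f : Polynomial ℂ) : j (Polynomial.aeval Z f) = Polynomial.aeval z f := by
    rw [← hj, Polynomial.aeval_algHom_apply]
  have avi (f : Polynomial ℂ) : j (Polynomial.aeval Zi f) = Polynomial.aeval zi f := by
    rw [← hji, Polynomial.aeval_algHom_apply]
  have f0 := semiconj_aeval t0 z z hz0.symm (polyF w)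
  have g0 := semiconj_aeval t0 z z hz0.symm (polyG w)
  have f0' := semiconj_aeval t0 zi zi hzi0.symm (polyF w)
  have g0' := semiconj_aeval t0 zi zi hzi0.symm (polyG w)
  have f1 := semiconj_aeval t1 zi z hz1.symm (polyF w)
  have g1 := semiconj_aeval t1 zi z hz1.symm (polyG w)
  have f1' := semiconj_aeval t1 z zi hzi1.symm (polyF w)
  have g1' := semiconj_aeval t1 z zi hzi1.symm (polyG w)
  rw [← av] at f0 g0 f1 g1 f1' g1'
  rw [← avi] at f0' g0' f1 g1 f1' g1'
  rw [← av, ← av]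
  have hS1 : Polynomial.aeval Z (polyF w) * Polynomial.aeval Zi (polyG w) +
      Polynomial.aeval Z (polyG w) * Polynomial.aeval Zi (polyF w) + (1+1-Z-Zi) *
      (Polynomial.aeval Z (polyG w) * Polynomial.aeval Zi (polyG w)) = 0 := by
    have := comm_rel (algebraMap ℂ SZ w) Z Zi (algebraMap ℂ SZ (1+2*w-w^3-w^4-w^5))
      (algebraMap ℂ SZ (1+w-2*w^3-2*w^4-w^5)) (algebraMap ℂ SZ (-1-w^3-w^4-w^5)) hZZ
      (by simp only [map_add, map_sub, map_mul, map_pow, map_one, map_neg, map_ofNat]; ring)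
    have hF (Y : SZ) : Polynomial.aeval Y (polyF w) =
        Y^4-algebraMap ℂ SZ (1+2*w-w^3-w^4-w^5)*Y^3+algebraMap ℂ SZ (1+w-2*w^3-2*w^4-w^5)*Y^2
        -algebraMap ℂ SZ (-1-w^3-w^4-w^5)*Y-algebraMap ℂ SZ w := by
      simp only [polyF, map_add (Polynomial.aeval (R := ℂ) Y), map_sub (Polynomial.aeval (R := ℂ) Y),
        map_mul (Polynomial.aeval (R := ℂ) Y), map_pow (Polynomial.aeval (R := ℂ) Y),
        Polynomial.aeval_X, Polynomial.aeval_C]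
    have hG (Y : SZ) : Polynomial.aeval Y (polyG w) = (1+algebraMap ℂ SZ w)*(Y^3-Y) := by
      simp only [polyG, map_add, map_sub, map_mul, map_pow, map_one,
        Polynomial.aeval_X, Polynomial.aeval_C]
    rw [hF, hF, hG, hG]
    exact this
  have hS2 := comm_rel2 (algebraMap ℂ SZ w) Z Zi hZZ
    (by rw [← map_pow, hw, map_sub, map_one, map_pow])
  obtain ⟨H, hH⟩ : ∃ H : SZ, 1 + Polynomial.aeval Z (polyF w) * Polynomial.aeval Zi (polyF w) * H
      = Z^18 := by
    have hF (Y : SZ) : Polynomial.aeval Y (polyF w) =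
        Y^4-(1+2*algebraMap ℂ SZ w-(algebraMap ℂ SZ w)^3-(algebraMap ℂ SZ w)^4-(algebraMap ℂ SZ w)^5)*Y^3
        +(1+algebraMap ℂ SZ w-2*(algebraMap ℂ SZ w)^3-2*(algebraMap ℂ SZ w)^4-(algebraMap ℂ SZ w)^5)*Y^2
        -(-1-(algebraMap ℂ SZ w)^3-(algebraMap ℂ SZ w)^4-(algebraMap ℂ SZ w)^5)*Y-algebraMap ℂ SZ w := by
      simp only [polyF, map_add, map_sub, map_mul, map_pow, map_one, map_neg, map_ofNat,
        Polynomial.aeval_X, Polynomial.aeval_C]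
    rw [hF, hF]
    exact ⟨_, hS2⟩
  have hn : j (1+1-Z-Zi) = 1+1-z-zi := by simp [hj, hji]
  have hz18 : j (Z^18) = z^18 := by rw [map_pow, hj]
  rw [← hn] at h00
  rw [← hz18]
  generalize Polynomial.aeval Z (polyF w) = F at *
  generalize Polynomial.aeval Z (polyG w) = G at *
  generalize Polynomial.aeval Zi (polyF w) = F' at *
  generalize Polynomial.aeval Zi (polyG w) = G' at *
  generalize (1+1-Z-Zi) = n at *
  have hjS : ∀ A B : SZ, j A * j B = j (A * B) := fun A B => (map_mul j A B).symm
  have key : (j F + j G * (t0+t1)) * (j F' + (t0-t1) * j G') = j (F * F') := by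
    have hA : (t0+t1)*(t0-t1) = j n * t0 := by
      calc (t0+t1)*(t0-t1) = t0*t0 - t1*t1 + (t1*t0 - t0*t1) := by noncomm_ring
        _ = j n * t0 := by rw [h01, h00]; abel
    have hB : (j F + j G * (t0+t1)) * (j F' + (t0-t1) * j G') =
        j F * j F' + j F * (t0 * j G') - j F * (t1 * j G') + j G * (t0 * j F') + j G * (t1 * j F')
          + j G * ((t0+t1)*(t0-t1)) * j G' := by noncomm_ring
    rw [hB, hA, g0', g1, f0', f1]
    have hC : j G * (j n * t0) * j G' = j (G * n * G') * t0 := by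
      rw [mul_assoc, mul_assoc, g0', map_mul, map_mul]; simp only [mul_assoc]
    rw [hC]
    simp only [← mul_assoc, hjS]
    have hD : j (F * G') * t0 + j (G * F') * t0 + j (G * n * G') * t0 = 0 := by
      rw [← add_mul, ← add_mul, ← map_add, ← map_add]
      rw [show F * G' + G * F' + G * n * G' = F * G' + G * F' + n * (G * G') by ring, hS1]
      simp
    rw [mul_comm F G]
    calc _ = j (F * F') + (j (F * G') * t0 + j (G * F') * t0 + j (G * n * G') * t0) := by abel
      _ = _ := by rw [hD, add_zero]
  have hZu : Z^18 * Zi^18 = 1 := by rw [← mul_pow, hZZ, one_pow]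
  -- inverse correction
  obtain ⟨H', hH'⟩ : ∃ H' : SZ, H + H' + H * (F * F') * H' = 0 := by
    refine ⟨- H * Zi^18, ?_⟩
    have : H - H * (Zi^18) * (1 + F * F' * H) = 0 := by
      rw [hH]; linear_combination -H * hZu
    linear_combination this
  have hH'' : H' + H + H' * (F * F') * H = 0 := by linear_combination hH'
  generalize hα : j F + j G * (t0+t1) = α at *
  generalize j F' + (t0-t1) * j G' = β at *
  have hinv : ∀ A B : SZ, A + B + A * (F * F') * B = 0 →
      (1 + β * j A * α) * (1 + β * j B * α) = 1 := by
    intro A B h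
    have e1 : (1 + β * j A * α) * (1 + β * j B * α) =
      1 + β * (j A + j B + j A * (α * β) * j B) * α := by noncomm_ring
    rw [e1, key, hjS, hjS, ← map_add, ← map_add, h]; simp
  refine ⟨⟨1 + β * j H * α, 1 + β * j H' * α, hinv _ _ hH', hinv _ _ hH''⟩, ?_⟩
  calc α * (1 + β * j H * α) = α + (α * β) * j H * α := by noncomm_ring
    _ = j (Z^18) * α := by rw [key, hjS, ← hH, map_add, map_one, add_mul, one_mul]

theorem rel1 : pb⁻¹ * pa^2 * pb * pa^2 = 1 := by
  have : (PresentedGroup.mk Prels) ((FreeGroup.of 1)⁻¹ * (FreeGroup.of 0) ^ 2 * (FreeGroup.of 1) * (FreeGroup.of 0) ^ 2) = 1 :=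
    PresentedGroup.one_of_mem (by simp [Prels])
  simpa [pa, pb, PresentedGroup.of] using this

theorem rel2 : pa⁻¹ * pb^2 * pa * pb^2 = 1 := by
  have : (PresentedGroup.mk Prels) ((FreeGroup.of 0)⁻¹ * (FreeGroup.of 1) ^ 2 * (FreeGroup.of 0) * (FreeGroup.of 1) ^ 2) = 1 :=
    PresentedGroup.one_of_mem (by simp [Prels])
  simpa [pa, pb, PresentedGroup.of] using this

theorem g_bx : pb * px = px⁻¹ * pb := by
  have h := rel1
  unfold px
  rw [eq_inv_mul_iff_mul_eq]
  have h2 : pb * (pb⁻¹ * pa^2 * pb * pa^2) = pb := by rw [h, mul_one]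
  rw [← mul_assoc]
  simpa [mul_assoc] using h2

theorem g_ay : pa * py = py⁻¹ * pa := by
  have h := rel2
  unfold py
  rw [eq_inv_mul_iff_mul_eq]
  have h2 : pa * (pa⁻¹ * pb^2 * pa * pb^2) = pa := by rw [h, mul_one]
  rw [← mul_assoc]
  simpa [mul_assoc] using h2

theorem g_ax : pa * px = px * pa := by unfold px; group
theorem g_by : pb * py = py * pb := by unfold py; group

/-- If `g u = v g` then `g u⁻¹ = v⁻¹ g`. -/
theorem g_inv {G : Type*} [Group G] {g u v : G} (h : g * u = v * g) : g * u⁻¹ = v⁻¹ * g :=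
  (SemiconjBy.inv_right (show SemiconjBy g u v from h)).eq

theorem g_bxi : pb * px⁻¹ = px * pb := by simpa using g_inv g_bx
theorem g_ayi : pa * py⁻¹ = py * pa := by simpa using g_inv g_ay

theorem g_yx : py * px = px * py := by
  have : py * px = pb * (pb * px) := by simp only [py, pow_two, mul_assoc]
  rw [this, g_bx, ← mul_assoc, g_bxi, mul_assoc, ← pow_two, py]

theorem g_cx : pa * pb * px = px⁻¹ * (pa * pb) := by
  rw [mul_assoc, g_bx, ← mul_assoc, g_inv g_ax, mul_assoc]
theorem g_cy : pa * pb * py = py⁻¹ * (pa * pb) := by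
  rw [mul_assoc, g_by, ← mul_assoc, g_ay, mul_assoc]
theorem g_zx : pz * px = px * pz := by
  have h := ((show SemiconjBy (pa*pb) px⁻¹ px by simpa [SemiconjBy] using g_inv g_cx).mul_left
    (show SemiconjBy (pa*pb) px px⁻¹ from g_cx)).eq
  rw [pz, pow_two]
  have h2 := ((show SemiconjBy (pa*pb) px⁻¹ px by simpa [SemiconjBy] using g_inv g_cx).mul_left
    (show SemiconjBy (pa*pb) px px⁻¹ from g_cx)).eq
  exact h2
theorem g_zy : pz * py = py * pz := by
  rw [pz, pow_two]
  exact ((show SemiconjBy (pa*pb) py⁻¹ py by simpa [SemiconjBy] using g_inv g_cy).mul_left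
    (show SemiconjBy (pa*pb) py py⁻¹ from g_cy)).eq

theorem g_ba : pb * pa = px⁻¹ * (py * (pz⁻¹ * (pa * pb))) := by
  have e : pz⁻¹ * (pa * pb) = pb⁻¹ * pa⁻¹ := by rw [pz, pow_two]; group
  rw [e]
  have e2 : py * (pb⁻¹ * pa⁻¹) = pb * pa⁻¹ := by unfold py; group
  rw [e2, ← mul_assoc, ← g_bx]; unfold px; group

theorem g_az : pa * pz = pz⁻¹ * pa := by
  rw [eq_inv_mul_iff_mul_eq]
  -- z a z = a
  have h1 : pa * pz = px * pb * pa * pb := by unfold px pz; simp only [pow_two, mul_assoc]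
  have h2 : px * pb = pb * px⁻¹ := g_bxi.symm
  have h3 : pa * pz = pb * pa⁻¹ * pb := by rw [h1, h2]; unfold px; group
  have h4 : py * pa⁻¹ * py = pa⁻¹ := by
    have : pa⁻¹ * py = py⁻¹ * pa⁻¹ := by
      have := g_ayi
      rw [inv_mul_eq_iff_eq_mul, ← mul_assoc, this]; group
    rw [mul_assoc, this]; group
  have h5 : pz * (pb * pa⁻¹ * pb) = pa * pb * pa * (py * pa⁻¹ * py) * pb⁻¹ := by
    rw [pz, py, pow_two, pow_two]; group
  rw [h3, h5, h4]; group

theorem g_bz : pb * pz = pz⁻¹ * pb := by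
  have hc : pb = pa⁻¹ * (pa * pb) := by group
  have h1 : SemiconjBy (pa * pb) pz pz := by
    show pa * pb * pz = pz * (pa * pb)
    rw [pz, pow_two]; group
  have h2 : SemiconjBy pa⁻¹ pz pz⁻¹ := by
    have h : SemiconjBy pa pz⁻¹ pz := by
      have := g_inv g_az
      rw [inv_inv] at this; exact this
    exact h.inv_symm_left
  have h3 := h2.mul_left h1
  rw [← hc] at h3
  exact h3.eq

/-- The group element as an element of the group ring. -/
abbrev o (g : P) : MonoidAlgebra ℂ P := MonoidAlgebra.of ℂ P g

def T0 : MonoidAlgebra ℂ P :=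
  1+1+1+1+o px+o px⁻¹+o py+o py⁻¹+(1+o px+o py+o px*o py)*(1+o pz⁻¹)*o pa*o pb
def T1 : MonoidAlgebra ℂ P :=
  (1+1+o px⁻¹*o py+o py⁻¹+o px⁻¹+o px⁻¹+o px⁻¹*o pz+o pz)*o pa
    +(o pz+o px*o py⁻¹*o pz+o px*o py⁻¹*o pz+o px*o pz+o px*o pz+o px*o px*o py⁻¹*o pz+o px+o px*o py⁻¹)*o pb

theorem T_rel : T0*T1=T1*T0 ∧ T0*T0 = T1*T1+(1+1-o pz-o pz⁻¹)*T0 ∧ o pz*T0=T0*o pz ∧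
    o pz*T1=T1*o pz⁻¹ ∧ o pz⁻¹*T1=T1*o pz := by
  have L {g h k l : P} (e : g*h=k*l) : o g*o h=o k*o l := by
    rw [← map_mul, ← map_mul, e]
  have L1 {g h : P} (e : g*h=1) : o g*o h=1 := by
    rw [← map_mul, e, map_one]
  have I {g u v : P} (h : g * u = v * g) : g⁻¹ * v = u * g⁻¹ := by
    rw [inv_mul_eq_iff_eq_mul, ← mul_assoc, h]; group
  refine tau_rel (o px) (o px⁻¹) (o py) (o py⁻¹) (o pz) (o pz⁻¹) (o pa) (o pb)
    (L1 (by group)) (L1 (by group)) (L1 (by group)) (L1 (by group)) (L1 (by group)) (L1 (by group))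
    (L g_yx) (L (g_inv g_yx)) (L (I g_yx)) (L (g_inv (I g_yx)))
    (L g_zx) (L (g_inv g_zx)) (L (I g_zx)) (L (g_inv (I g_zx)))
    (L g_zy) (L (g_inv g_zy)) (L (I g_zy)) (L (g_inv (I g_zy)))
    (L g_ax) (L (g_inv g_ax)) (L g_ay) (L g_ayi) (L g_az) (L (by simpa using g_inv g_az))
    (L g_bx) (L g_bxi) (L g_by) (L (g_inv g_by)) (L g_bz) (L (by simpa using g_inv g_bz))
    ?_ ?_ ?_ T0 T1 rfl rfl
  · rw [← map_mul, px, pow_two]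
  · rw [← map_mul, py, pow_two]
  · simp only [← map_mul]; rw [g_ba]

theorem exists_unit (w : ℂ) (hw : w^6=w^3-1) : ∃ u : (MonoidAlgebra ℂ P)ˣ,
    (Polynomial.aeval (o pz) (polyF w) + Polynomial.aeval (o pz) (polyG w) * (T0 + T1)) * u =
    (o pz)^18 * (Polynomial.aeval (o pz) (polyF w) + Polynomial.aeval (o pz) (polyG w) * (T0 + T1)) := by
  obtain ⟨h1,h2,h3,h4,h5⟩ := T_rel
  refine core_unit w hw T0 T1 (o pz) (o pz⁻¹) (by rw [← map_mul, mul_inv_cancel, map_one]) (by rw [← map_mul, inv_mul_cancel, map_one])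
    h1 h2 h3 h4 h5 (MonoidAlgebra.mapDomainAlgHom ℂ ℂ (zpowersHom P pz)) ?_ ?_
  · simp [zpowersHom_apply]
  · simp [zpowersHom_apply]

/-- Integer powers of `t`. -/
def zp (t : ℂ) (i : ZMod 0) : ℂ := HPow.hPow (β := ℤ) t i

theorem zp_add (t : ℂ) (ht : t ≠ 0) (i k : ZMod 0) : zp t (i + k) = zp t i * zp t k :=
  zpow_add₀ ht (G₀ := ℂ) (a := t) i k
theorem zp_zero (t : ℂ) : zp t 0 = 1 := zpow_zero t
theorem zp_one (t : ℂ) : zp t 1 = t := zpow_one t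
theorem zp_neg (t : ℂ) (i : ZMod 0) : zp t (-i) = (zp t i)⁻¹ := zpow_neg t i

/-- Representation of the infinite dihedral group. -/
def dihRep (t : ℂ) (ht : t ≠ 0) : DihedralGroup 0 →* Matrix (Fin 2) (Fin 2) ℂ where
  toFun g := match g with
    | .r i => !![zp t i, 0; 0, zp t (-i)]
    | .sr i => !![0, zp t (-i); zp t i, 0]
  map_one' := by
    show !![zp t 0, 0; 0, zp t (-0)] = 1
    simp [Matrix.one_fin_two, zp_zero]
  map_mul' := by
    rintro (i | i) (k | k)
    · show !![zp t (i+k), 0; 0, zp t (-(i+k))] = !![zp t i, 0; 0, zp t (-i)] * !![zp t k, 0; 0, zp t (-k)]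
      simp [Matrix.mul_fin_two, sub_eq_add_neg, zp_add t ht, zp_neg, mul_comm]
    · show !![0, zp t (-(k-i)); zp t (k-i), 0] = !![zp t i, 0; 0, zp t (-i)] * !![0, zp t (-k); zp t k, 0]
      simp [Matrix.mul_fin_two, sub_eq_add_neg, zp_add t ht, zp_neg, mul_comm]
    · show !![0, zp t (-(i+k)); zp t (i+k), 0] = !![0, zp t (-i); zp t i, 0] * !![zp t k, 0; 0, zp t (-k)]
      simp [Matrix.mul_fin_two, sub_eq_add_neg, zp_add t ht, zp_neg, mul_comm]
    · show !![zp t (k-i), 0; 0, zp t (-(k-i))] = !![0, zp t (-i); zp t i, 0] * !![0, zp t (-k); zp t k, 0]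
      simp [Matrix.mul_fin_two, sub_eq_add_neg, zp_add t ht, zp_neg, mul_comm]

def toDih : P →* DihedralGroup 0 :=
  PresentedGroup.toGroup (f := ![DihedralGroup.sr 0, DihedralGroup.sr 1]) (by
    intro r hr
    rcases hr with rfl | rfl <;> simp [pow_two])

theorem toDih_a : toDih pa = .sr 0 := by simp [toDih, pa]
theorem toDih_b : toDih pb = .sr 1 := by simp [toDih, pb]

def rep (t : ℂ) (ht : t ≠ 0) : MonoidAlgebra ℂ P →ₐ[ℂ] Matrix (Fin 2) (Fin 2) ℂ :=
  MonoidAlgebra.lift ℂ _ P ((dihRep t ht).comp toDih)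

theorem rep_o (t : ℂ) (ht : t ≠ 0) (g : P) : rep t ht (o g) = dihRep t ht (toDih g) := by
  simp [rep, o]
theorem rep_a (t : ℂ) (ht : t ≠ 0) : rep t ht (o pa) = !![0, 1; 1, 0] := by
  rw [rep_o, toDih_a]
  show !![0, zp t (-0); zp t 0, 0] = _
  simp [zp_neg, zp_zero, zp_one]
theorem rep_b (t : ℂ) (ht : t ≠ 0) : rep t ht (o pb) = !![0, t⁻¹; t, 0] := by
  rw [rep_o, toDih_b]
  show !![0, zp t (-1); zp t 1, 0] = _
  simp [zp_neg, zp_zero, zp_one]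
theorem rep_x (t : ℂ) (ht : t ≠ 0) : rep t ht (o px) = 1 := by
  rw [rep_o, px, map_pow, toDih_a]; simp [pow_two]
theorem rep_y (t : ℂ) (ht : t ≠ 0) : rep t ht (o py) = 1 := by
  rw [rep_o, py, map_pow, toDih_b]; simp [pow_two]
theorem rep_xi (t : ℂ) (ht : t ≠ 0) : rep t ht (o px⁻¹) = 1 := by
  rw [rep_o, px, map_inv, map_pow, toDih_a]; simp [pow_two]
theorem rep_yi (t : ℂ) (ht : t ≠ 0) : rep t ht (o py⁻¹) = 1 := by
  rw [rep_o, py, map_inv, map_pow, toDih_b]; simp [pow_two]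
theorem rep_z (t : ℂ) (ht : t ≠ 0) : rep t ht (o pz) = !![t^2, 0; 0, (t^2)⁻¹] := by
  rw [pz, o, map_pow, map_mul, map_pow, map_mul, rep_a, rep_b, pow_two]
  simp [Matrix.mul_fin_two, pow_two]
theorem rep_zi (t : ℂ) (ht : t ≠ 0) : rep t ht (o pz⁻¹) = !![(t^2)⁻¹, 0; 0, t^2] := by
  have h : rep t ht (o pz⁻¹) * rep t ht (o pz) = 1 := by
    rw [← map_mul, ← map_mul, inv_mul_cancel, map_one, map_one]
  rw [rep_z] at h
  have h2 : (!![t^2, 0; 0, (t^2)⁻¹] : Matrix (Fin 2) (Fin 2) ℂ) * !![(t^2)⁻¹, 0; 0, t^2] = 1 := by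
    simp [Matrix.mul_fin_two, Matrix.one_fin_two, ht]
  exact left_inv_eq_right_inv h h2

theorem aeval_diag (p q : ℂ) (f : Polynomial ℂ) :
    Polynomial.aeval (!![p, 0; 0, q] : Matrix (Fin 2) (Fin 2) ℂ) f = !![f.eval p, 0; 0, f.eval q] := by
  have hpow : ∀ n : ℕ, (!![p, 0; 0, q] : Matrix (Fin 2) (Fin 2) ℂ)^n = !![p^n, 0; 0, q^n] := by
    intro n
    induction n with
    | zero => simp [Matrix.one_fin_two]
    | succ n ih => rw [pow_succ, ih]; simp [Matrix.mul_fin_two, pow_succ]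
  induction f using Polynomial.induction_on' with
  | add f g hf hg => simp [hf, hg]
  | monomial n a =>
    rw [Polynomial.aeval_monomial, hpow, ← Algebra.smul_def]
    simp

theorem rep_T (t : ℂ) (ht : t ≠ 0) : ∃ m n : ℂ, rep t ht (T0 + T1) =
    !![8 + 4 * (t + t⁻¹), m; 6 + 2 * (t^2)⁻¹ + (6 * (t^2)⁻¹ + 2) * t, n] := by
  refine ⟨rep t ht (T0 + T1) 0 1, rep t ht (T0 + T1) 1 1, ?_⟩
  have h1 : rep t ht (T0 + T1) 0 0 = 8 + 4 * (t + t⁻¹) := by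
    simp only [T0, T1, map_add, map_mul, map_one, rep_a, rep_b, rep_x, rep_y, rep_xi, rep_yi, rep_z, rep_zi, Matrix.one_fin_two]
    simp [Matrix.mul_fin_two]
    field_simp
    ring
  have h2 : rep t ht (T0 + T1) 1 0 = 6 + 2 * (t^2)⁻¹ + (6 * (t^2)⁻¹ + 2) * t := by
    simp only [T0, T1, map_add, map_mul, map_one, rep_a, rep_b, rep_x, rep_y, rep_xi, rep_yi, rep_z, rep_zi, Matrix.one_fin_two]
    simp [Matrix.mul_fin_two]
    field_simp
    ring
  rw [← h1, ← h2]
  exact Matrix.eta_fin_two _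

open Polynomial in
theorem exists_t (w : ℂ) (hw0 : w ≠ 0) (hw1 : 1 + w ≠ 0) : ∃ t : ℂ, t ≠ 0 ∧ t^144 ≠ 1 ∧
    (polyF w).eval (t^2) + (polyG w).eval (t^2) * (8 + 4 * (t + t⁻¹)) ≠ 0 ∧
    (polyG w).eval (t^2)⁻¹ * (6 + 2 * (t^2)⁻¹ + (6 * (t^2)⁻¹ + 2) * t) ≠ 0 := by
  let q1 : ℂ[X] := (polyF w).comp (X^2) + C (4*(1+w)) * (X^5-X) * (X+1)^2
  let q2 : ℂ[X] := (1-X^4)*(2*X^3+6*X^2+6*X+2)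
  have hq : X * ((X^144-1) * (q1 * q2)) ≠ 0 := by
    refine mul_ne_zero X_ne_zero ?_
    intro h
    have := congrArg (eval 0) h
    simp [q1, q2, polyF, hw0] at this
  obtain ⟨t, ht⟩ : ∃ t : ℂ, eval t (X * ((X^144-1) * (q1 * q2))) ≠ 0 := by
    by_contra hcon
    push Not at hcon
    exact hq (Polynomial.funext (by simpa using hcon))
  simp only [eval_mul, eval_X, mul_ne_zero_iff] at ht
  obtain ⟨h0, h1, h2, h3⟩ := ht
  refine ⟨t, h0, ?_, ?_, ?_⟩
  · intro h; apply h1; simp [h]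
  · intro h; apply h2
    rw [← h]
    simp only [q1, polyG, eval_add, eval_comp, eval_mul, eval_sub, eval_pow, eval_X, eval_C, eval_one]
    field_simp
    ring
  · intro h; apply h3
    have : eval t q2 * (1+w) = (polyG w).eval (t^2)⁻¹ * (6 + 2 * (t^2)⁻¹ + (6 * (t^2)⁻¹ + 2) * t) * t^8 := by
      simp only [q2, polyG, eval_add, eval_mul, eval_sub, eval_pow, eval_X, eval_C, eval_one, eval_ofNat]
      field_simp
      ring
    rw [h, zero_mul] at this
    exact (mul_eq_zero.mp this).resolve_right hw1

theorem rep_shape (t : ℂ) (ht : t ≠ 0) (g : P) (c : ℂ) : (∃ k l : ℂ,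
    rep t ht (MonoidAlgebra.single g c) = !![k, 0; 0, l]) ∨ (∃ k l : ℂ,
    rep t ht (MonoidAlgebra.single g c) = !![0, k; l, 0]) := by
  have h : rep t ht (MonoidAlgebra.single g c) = c • dihRep t ht (toDih g) := by
    simp [rep]
  rw [h]
  rcases toDih g with i | i
  · left
    refine ⟨c * zp t i, c * zp t (-i), ?_⟩
    show c • !![zp t i, 0; 0, zp t (-i)] = _
    simp
  · right
    refine ⟨c * zp t (-i), c * zp t i, ?_⟩
    show c • !![0, zp t (-i); zp t i, 0] = _
    simp

theorem complex_group_ring_has_nontrivial_unit :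
    ∃ u : (MonoidAlgebra ℂ P)ˣ,
      ¬∃ (c : ℂˣ) (g : P), (u : MonoidAlgebra ℂ P) = MonoidAlgebra.single g (c : ℂ) := by
  obtain ⟨w, hw⟩ : ∃ w : ℂ, w^6 = w^3 - 1 := by
    obtain ⟨s, hs⟩ := IsAlgClosed.exists_pow_nat_eq (-3 : ℂ) (n := 2) (by norm_num)
    obtain ⟨w, hw⟩ := IsAlgClosed.exists_pow_nat_eq ((1 + s) / 2 : ℂ) (n := 3) (by norm_num)
    refine ⟨w, ?_⟩
    have : w^6 = (w^3)^2 := by ring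
    rw [this, hw]
    linear_combination hs / 4
  have hw0 : w ≠ 0 := by rintro rfl; norm_num at hw
  have hw1 : 1 + w ≠ 0 := by
    intro h
    have : w = -1 := by linear_combination h
    rw [this] at hw; norm_num at hw
  obtain ⟨u, hu⟩ := exists_unit w hw
  refine ⟨u, ?_⟩
  rintro ⟨c, g, hcg⟩
  obtain ⟨t, ht, h144, hA, hC⟩ := exists_t w hw0 hw1
  obtain ⟨m, n, hT⟩ := rep_T t ht
  have hu' := congrArg (rep t ht) hu
  rw [map_mul, map_mul, map_add, map_mul, hT, map_pow, ← Polynomial.aeval_algHom_apply,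
    ← Polynomial.aeval_algHom_apply, rep_z, aeval_diag, aeval_diag, hcg] at hu'
  have hz18 : (!![t^2, 0; 0, (t^2)⁻¹] : Matrix (Fin 2) (Fin 2) ℂ)^18 = !![t^36, 0; 0, (t^36)⁻¹] := by
    have := aeval_diag (t^2) (t^2)⁻¹ (Polynomial.X^18)
    simp only [map_pow, Polynomial.aeval_X, Polynomial.eval_pow, Polynomial.eval_X] at this
    rw [this, inv_pow, ← pow_mul]
  rw [hz18] at hu'
  simp only [Matrix.mul_fin_two, Matrix.of_add_of, Matrix.cons_add_cons, zero_mul, add_zero, zero_add,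
    Matrix.empty_add_empty] at hu'
  generalize (polyF w).eval (t^2) + (polyG w).eval (t^2) * (8 + 4 * (t + t⁻¹)) = A at *
  generalize (polyG w).eval (t^2)⁻¹ * (6 + 2 * (t^2)⁻¹ + (6 * (t^2)⁻¹ + 2) * t) = C at *
  generalize (polyG w).eval (t^2) * m = B at *
  generalize (polyF w).eval (t^2)⁻¹ + (polyG w).eval (t^2)⁻¹ * n = D at *
  have h36 : t^36 ≠ 0 := pow_ne_zero _ ht
  have hne : (t^36)^2 ≠ ((t^36)⁻¹)^2 := by
    intro h
    apply h144
    field_simp at h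
    linear_combination h
  generalize t^36 = z1 at *
  generalize z1⁻¹ = z2 at *
  rcases rep_shape t ht g c with ⟨k, l, hk⟩ | ⟨k, l, hk⟩
  · rw [hk] at hu'
    have e1 := congrFun (congrFun hu' 0) 0
    have e2 := congrFun (congrFun hu' 1) 0
    simp [Matrix.mul_apply] at e1 e2
    have k1 : k = z1 := mul_left_cancel₀ hA (by linear_combination e1)
    have k2 : k = z2 := mul_left_cancel₀ hC (by linear_combination e2)
    exact hne (by rw [← k1, ← k2])
  · rw [hk] at hu'
    have e1 := congrFun (congrFun hu' 0) 0
    have e2 := congrFun (congrFun hu' 1) 0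
    have e3 := congrFun (congrFun hu' 0) 1
    have e4 := congrFun (congrFun hu' 1) 1
    simp [Matrix.mul_apply] at e1 e2 e3 e4
    have k1 : k * l = z1^2 := mul_left_cancel₀ hA (by linear_combination l * e3 + z1 * e1)
    have k2 : k * l = z2^2 := mul_left_cancel₀ hC (by linear_combination l * e4 + z2 * e2)
    exact hne (by rw [← k1, ← k2])
end
end
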